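/- arXiv:2102.00285 — 2 statements merged into one kernel-verified Lean document; each statement's English description precedes it below -/
import Mathlib

section
/- Let G = ⟨a,b,c,… | V^k⟩ be a one-relator group whose single defining relator is a proper power V^k with k > 1 and V not itself a proper power in the free group on the generators. Then the image of V in G has order exactly k, and every element of finite order in G is a conjugate of a power of V. -/
/-!
Following Magnus, three assertions about a relator `r` are proved simultaneously by induction on its
length: the Freiheitssatz, the fact that a `k`-th root of `r` has order divisible by `k`, and the
fact that every torsion element is conjugate to the image of an element commuting with `r` in the
free group.

* If some letter `t` of `r` has exponent sum zero, then `r` is a shorter word in the conjugates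
  `t ^ i * s * t ^ (-i)`, and the Freiheitssatz for this shorter word exhibits the group of `r`
  as a retract of an HNN extension of the one-relator group of the shorter word. Torsion in an HNN
  extension is conjugate into the base.
* Otherwise, replace `t` by a power of `t` and another letter `s` by `s * t ^ q`, so that the
  exponent sum of `t` becomes zero. The group of the new relator maps to the group of `r` with
  a root of `t` adjoined, and torsion in an amalgamated product is conjugate into a factor.

Commuting elements of a free group are powers of a common element, so if `V` is not a proper power,
only powers of `V` commute with `V ^ k`.
-/

namespace OneRelator

universe u

section CyclicChains

variable {X P : Type*} [Group P] {R : X → X → Prop}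

theorem isChain_flatten_replicate {l : List X} (h : (l ++ l).IsChain R) (n : ℕ) :
    (List.replicate n l).flatten.IsChain R := by
  obtain rfl | hl := eq_or_ne l []
  · simp
  obtain ⟨hchain, -, hjoin⟩ := List.isChain_append.1 h
  rw [List.isChain_flatten fun hmem => hl (List.eq_of_mem_replicate hmem).symm]
  exact ⟨fun l' hl' => List.eq_of_mem_replicate hl' ▸ hchain,
    List.isChain_replicate_of_rel n hjoin⟩

theorem exists_not_rel_of_not_isChain_append_self {l : List X} (h : ¬(l ++ l).IsChain R) :
    ∃ y z, ¬R y z ∧ ((l = [y] ∧ y = z) ∨ ∃ l', l ~r y :: z :: l') := by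
  by_cases hchain : l.IsChain R
  · obtain ⟨y, hy, z, hz, hyz⟩ : ∃ y ∈ l.getLast?, ∃ z ∈ l.head?, ¬R y z := by
      by_contra! hjoin
      exact h (List.isChain_append.2 ⟨hchain, hchain, hjoin⟩)
    refine ⟨y, z, hyz, ?_⟩
    obtain ⟨l', rfl⟩ := List.getLast?_eq_some_iff.1 hy
    cases l' with
    | nil => exact .inl ⟨rfl, by simpa using hz⟩
    | cons x l' =>
      obtain rfl : x = z := by simpa using hz
      exact .inr ⟨l', List.isRotated_concat y (x :: l')⟩
  · obtain ⟨y, z, l₁, l₂, rfl, hyz⟩ :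
        ∃ y z l₁ l₂, l = l₁ ++ y :: z :: l₂ ∧ ¬R y z := by
      simpa [List.isChain_iff_forall_rel_of_append_cons_cons] using hchain
    exact ⟨y, z, hyz, .inr ⟨l₂ ++ l₁, List.isRotated_append⟩⟩

theorem isConj_prod_of_isRotated {l l' : List P} (h : l ~r l') : IsConj l.prod l'.prod := by
  obtain ⟨n, rfl⟩ := h
  rw [List.rotate_eq_drop_append_take_mod, List.prod_append]
  refine isConj_iff.2 ⟨(l.take (n % l.length)).prod⁻¹, ?_⟩
  rw [← List.prod_take_mul_prod_drop l (n % l.length)]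
  group

/-- Cyclic reduction: an element of finite order, written as a product of letters, can be shortened
up to conjugacy until it is elliptic, because a cyclically reduced word has infinite order. -/
theorem exists_isConj_of_isOfFinOrder_prod (f : X → P) {T : Set P} (one_mem : 1 ∈ T)
    (prod_ne_one : ∀ l : List X, l ≠ [] → (l ++ l).IsChain R → (l.map f).prod ≠ 1)
    (shorten : ∀ y z l, ¬R y z →
      (∃ e ∈ T, IsConj ((y :: z :: l).map f).prod e) ∨
        ∃ l' : List X, l'.length < l.length + 2 ∧
          IsConj ((y :: z :: l).map f).prod (l'.map f).prod)
    (single : ∀ y, ¬R y y → ∃ e ∈ T, IsConj (f y) e) (l : List X)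
    (hl : IsOfFinOrder (l.map f).prod) : ∃ e ∈ T, IsConj (l.map f).prod e := by
  induction hn : l.length using Nat.strong_induction_on generalizing l with
  | _ n ih =>
  subst hn
  obtain rfl | hne := eq_or_ne l []
  · exact ⟨1, one_mem, by simp⟩
  by_cases hchain : (l ++ l).IsChain R
  · obtain ⟨n, hn, hpow⟩ := isOfFinOrder_iff_pow_eq_one.1 hl
    refine absurd ?_ (prod_ne_one (List.replicate n l).flatten ?_ ?_)
    · simpa [List.prod_flatten, List.map_flatten] using hpow
    · simpa [hn.ne'] using hne
    · simpa [← List.flatten_append, ← List.replicate_add]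
        using isChain_flatten_replicate hchain (n + n)
  obtain ⟨y, z, hyz, ⟨rfl, rfl⟩ | ⟨l', hrot⟩⟩ := exists_not_rel_of_not_isChain_append_self hchain
  · simpa using single y hyz
  have hconj := isConj_prod_of_isRotated (hrot.map f)
  obtain ⟨e, he, hconj'⟩ | ⟨l'', hlt, hconj'⟩ := shorten y z l' hyz
  · exact ⟨e, he, hconj.trans hconj'⟩
  · have hconj := hconj.trans hconj'
    have hlen : l.length = l'.length + 2 := hrot.perm.length_eq
    obtain ⟨e, he, h⟩ := ih l''.length (hlen ▸ hlt) l'' (hconj.isOfFinOrder hl) rfl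
    exact ⟨e, he, hconj.trans h⟩

end CyclicChains

section HNN

open HNNExtension

variable {G : Type*} [Group G] {A B : Subgroup G} {φ : A ≃* B}

/-- The factor `t ^ ε * g` contributed by the letter `(ε, g)` of a word in an HNN extension. -/
def hnnLetter (φ : A ≃* B) (y : ℤˣ × G) : HNNExtension G A B φ :=
  t ^ (y.1 : ℤ) * of y.2

theorem exists_eq_of_mul_prod_hnnLetter (x : HNNExtension G A B φ) :
    ∃ (g : G) (l : List (ℤˣ × G)), x = of g * (l.map (hnnLetter φ)).prod := by
  obtain ⟨d⟩ := NormalWord.TransversalPair.nonempty G A B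
  have hx : (x • (NormalWord.empty : NormalWord d)).prod φ = x := by
    rw [NormalWord.prod_smul, NormalWord.prod_empty, mul_one]
  exact ⟨_, _, hx.symm⟩

theorem prod_hnnLetter_ne_one {l : List (ℤˣ × G)} (hl : l ≠ [])
    (hchain : l.IsChain fun y z => y.2 ∈ toSubgroup A B y.1 → y.1 = z.1) :
    (l.map (hnnLetter φ)).prod ≠ 1 := by
  intro h
  have hw := ReducedWord.toList_eq_nil_of_mem_of_range φ ⟨1, l, hchain⟩
    (by simp [NormalWord.ReducedWord.prod, ← hnnLetter.eq_def, h, one_mem])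
  exact hl hw

theorem t_zpow_mul_of (ε : ℤˣ) {g : G} (hg : g ∈ toSubgroup A B ε) :
    (t ^ (ε : ℤ) * of g : HNNExtension G A B φ) =
      of (toSubgroupEquiv φ ε ⟨g, hg⟩ : G) * t ^ (ε : ℤ) := by
  obtain rfl | rfl := Int.units_eq_one_or ε
  · exact (zpow_one (t : HNNExtension G A B φ)).symm ▸ t_mul_of (φ := φ) ⟨g, hg⟩
  · exact (zpow_neg_one (t : HNNExtension G A B φ)).symm ▸ inv_t_mul_of (φ := φ) ⟨g, hg⟩

theorem isConj_of_mul_prod_hnnLetter (g : G) (l : List (ℤˣ × G)) :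
    (∃ g', IsConj (of g * (l.map (hnnLetter φ)).prod) (of g')) ∨
      ∃ l' : List (ℤˣ × G), l'.length = l.length ∧
        IsConj (of g * (l.map (hnnLetter φ)).prod) (l'.map (hnnLetter φ)).prod := by
  obtain rfl | ⟨l, y, rfl⟩ := List.eq_nil_or_concat' l
  · exact .inl ⟨g, by rw [List.map_nil, List.prod_nil, mul_one]⟩
  · refine .inr ⟨l ++ [(y.1, y.2 * g)], by simp, isConj_iff.2 ⟨(of g)⁻¹, ?_⟩⟩
    simp [hnnLetter, mul_assoc]

theorem exists_isConj_of_of_isOfFinOrder {x : HNNExtension G A B φ} (hx : IsOfFinOrder x) :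
    ∃ g, IsConj (of g) x := by
  have key (l : List (ℤˣ × G)) (hl : IsOfFinOrder (l.map (hnnLetter φ)).prod) :
      ∃ e ∈ Set.range of, IsConj (l.map (hnnLetter φ)).prod e := by
    refine exists_isConj_of_isOfFinOrder_prod
      (R := fun y z => y.2 ∈ toSubgroup A B y.1 → y.1 = z.1) (hnnLetter φ)
      (T := Set.range of)
      (one_mem := ⟨1, map_one of⟩)
      (prod_ne_one := fun l hne hchain => prod_hnnLetter_ne_one hne hchain.left_of_append)
      (shorten := fun y z l hyz => ?_) (single := by simp) l hl
    obtain ⟨hy, _⟩ := Classical.not_imp.1 hyz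
    have hz : z.1 = -y.1 := by
      rcases Int.units_eq_one_or y.1 with h | h <;> rcases Int.units_eq_one_or z.1 with h' | h' <;>
        simp_all
    have hprod : ((y :: z :: l).map (hnnLetter φ)).prod =
        of (toSubgroupEquiv φ y.1 ⟨y.2, hy⟩ * z.2) * (l.map (hnnLetter φ)).prod := by
      simp [hnnLetter, t_zpow_mul_of y.1 hy, hz, mul_assoc]
    rw [hprod]
    obtain ⟨g, hg⟩ | ⟨l', hlen, hl'⟩ := isConj_of_mul_prod_hnnLetter (φ := φ) _ l
    · exact .inl ⟨_, ⟨g, rfl⟩, hg⟩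
    · exact .inr ⟨l', by lia, hl'⟩
  obtain ⟨g, l, rfl⟩ := exists_eq_of_mul_prod_hnnLetter x
  obtain ⟨g', hg'⟩ | ⟨l', -, hl'⟩ := isConj_of_mul_prod_hnnLetter (φ := φ) g l
  · exact ⟨g', hg'.symm⟩
  · obtain ⟨_, ⟨g', rfl⟩, hg'⟩ := key l' (hl'.isOfFinOrder hx)
    exact ⟨g', (hl'.trans hg').symm⟩

end HNN

section Pushout

open Monoid PushoutI

variable {ι : Type*} {G : ι → Type*} {H : Type*} [∀ i, Group (G i)] [Group H]
  {φ : ∀ i, H →* G i}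

/-- The element of an amalgamated product contributed by a letter of a word in the factors. -/
def pushoutLetter (φ : ∀ i, H →* G i) (y : Σ i, G i) : PushoutI φ :=
  PushoutI.of y.1 y.2

/-- Reduced words in the factors of an amalgamated product: consecutive letters come from different
factors and no letter lies in the amalgamated subgroup. -/
def IsReducedWord (φ : ∀ i, H →* G i) (l : List (Σ i, G i)) : Prop :=
  (∀ y ∈ l, y.2 ∉ (φ y.1).range) ∧ l.IsChain fun y z => y.1 ≠ z.1

/-- The relation between two consecutive letters `y`, `z` which prevents the product `y * z` from
being a single letter in the factor of `z`. -/
def Unmergeable (φ : ∀ i, H →* G i) (y z : Σ i, G i) : Prop :=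
  y.2 ∉ (φ y.1).range ∧ y.1 ≠ z.1

theorem exists_merge_of_not_unmergeable {y z : Σ i, G i} (h : ¬Unmergeable φ y z) :
    ∃ w : Σ i, G i, w.1 = z.1 ∧
      pushoutLetter φ w = pushoutLetter φ y * pushoutLetter φ z := by
  obtain ⟨⟨i, y⟩, ⟨j, z⟩⟩ := y, z
  by_cases hy : y ∈ (φ i).range
  · obtain ⟨x, rfl⟩ := hy
    exact ⟨⟨j, φ j x * z⟩, rfl, by simp [pushoutLetter, of_apply_eq_base]⟩
  · obtain rfl : i = j := by simpa [Unmergeable, hy] using h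
    exact ⟨⟨i, y * z⟩, rfl, map_mul _ _ _⟩

theorem IsReducedWord.of_isChain_concat {l : List (Σ i, G i)} {x : Σ i, G i}
    (h : (l ++ [x]).IsChain (Unmergeable φ)) : IsReducedWord φ l := by
  refine ⟨fun y hy => ?_, (h.imp fun _ _ => And.right).left_of_append⟩
  obtain ⟨l₁, l₂, rfl⟩ := List.append_of_mem hy
  obtain ⟨z, l₃, hz⟩ := List.exists_cons_of_ne_nil (List.concat_ne_nil x l₂)
  have hsplit : l₁ ++ y :: l₂ ++ [x] = l₁ ++ y :: z :: l₃ := by simp [← hz]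
  exact (List.isChain_iff_forall_rel_of_append_cons_cons.1 h hsplit).1

theorem IsReducedWord.eq_nil_of_prod_mem_range_base (hφ : ∀ i, Function.Injective (φ i))
    {l : List (Σ i, G i)} (hl : IsReducedWord φ l)
    (h : (l.map (pushoutLetter φ)).prod ∈ (base φ).range) : l = [] := by
  let w : CoprodI.Word G := ⟨l, fun y hy h1 => hl.1 y hy (h1 ▸ one_mem _), hl.2⟩
  have hw : ofCoprodI w.prod = (l.map (pushoutLetter φ)).prod := by
    simp only [CoprodI.Word.prod, map_list_prod, List.map_map, w]
    rfl
  exact congrArg CoprodI.Word.toList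
    (Reduced.eq_empty_of_mem_range (w := w) hφ hl.1 (hw ▸ h))

theorem IsReducedWord.eq_nil_of_prod_mem_range_of (hφ : ∀ i, Function.Injective (φ i))
    {l : List (Σ i, G i)} (hl : IsReducedWord φ l) {j : ι} (hj : ∀ y ∈ l.head?, j ≠ y.1)
    (h : (l.map (pushoutLetter φ)).prod ∈ (of (φ := φ) j).range) : l = [] := by
  obtain ⟨a, ha⟩ := h
  by_cases haφ : a ∈ (φ j).range
  · obtain ⟨x, rfl⟩ := haφ
    exact hl.eq_nil_of_prod_mem_range_base hφ ⟨x, by rw [← ha, of_apply_eq_base]⟩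
  · have hcons : IsReducedWord φ (⟨j, a⁻¹⟩ :: l) :=
      ⟨List.forall_mem_cons.2 ⟨by simpa using haφ, hl.1⟩, List.isChain_cons.2 ⟨hj, hl.2⟩⟩
    have := hcons.eq_nil_of_prod_mem_range_base hφ (by simp [pushoutLetter, ← ha])
    contradiction

theorem IsReducedWord.length_le_one (hφ : ∀ i, Function.Injective (φ i))
    {l : List (Σ i, G i)} (hl : IsReducedWord φ l) {j : ι}
    (h : (l.map (pushoutLetter φ)).prod ∈ (of (φ := φ) j).range) : l.length ≤ 1 := by
  obtain _ | ⟨y, l⟩ := l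
  · simp
  by_cases hy : j = y.1
  · subst hy
    have hl' : IsReducedWord φ l := ⟨fun z hz => hl.1 z (List.mem_cons_of_mem _ hz), hl.2.tail⟩
    rw [List.map_cons, List.prod_cons] at h
    have h' := (Subgroup.mul_mem_cancel_left (of (φ := φ) y.1).range ⟨y.2, rfl⟩).1 h
    simp [hl'.eq_nil_of_prod_mem_range_of hφ (List.isChain_cons.1 hl.2).1 h']
  · exact absurd (hl.eq_nil_of_prod_mem_range_of hφ (by simpa using hy) h) (by simp)

theorem IsReducedWord.conj {l : List (Σ i, G i)} (hl : IsReducedWord φ l) {x : Σ i, G i}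
    (hx : x.2 ∉ (φ x.1).range) (hlast : ∀ y ∈ l.getLast?, y.1 ≠ x.1) :
    IsReducedWord φ (l ++ x :: (l.map fun y => ⟨y.1, y.2⁻¹⟩).reverse) := by
  have hchain : ((l ++ [x]).map Sigma.fst).IsChain (· ≠ ·) :=
    (List.isChain_map Sigma.fst).2 (List.isChain_append.2 ⟨hl.2, by simp, by simpa using hlast⟩)
  refine ⟨?_, List.isChain_split.2 ⟨(List.isChain_map Sigma.fst).1 hchain, ?_⟩⟩
  · simp only [List.mem_append, List.mem_cons, List.mem_reverse, List.mem_map]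
    rintro y (hy | rfl | ⟨z, hz, rfl⟩)
    exacts [hl.1 y hy, hx, by simpa using hl.1 z hz]
  · have hrev := List.isChain_reverse.2 (hchain.imp fun _ _ => Ne.symm)
    refine (List.isChain_map (R := (· ≠ ·)) Sigma.fst).1 ?_
    simpa [Function.comp_def] using hrev

theorem exists_prod_pushoutLetter_eq [Nonempty ι] (x : PushoutI φ) :
    ∃ l : List (Σ i, G i), (l.map (pushoutLetter φ)).prod = x := by
  induction x using PushoutI.induction_on with
  | of i g => exact ⟨[⟨i, g⟩], by simp [pushoutLetter]⟩
  | base h =>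
    obtain ⟨i⟩ := ‹Nonempty ι›
    exact ⟨[⟨i, φ i h⟩], by simp [pushoutLetter, of_apply_eq_base]⟩
  | mul x y hx hy =>
    obtain ⟨l, rfl⟩ := hx
    obtain ⟨l', rfl⟩ := hy
    exact ⟨l ++ l', by simp⟩

theorem exists_isChain_unmergeable {i : ι} (l : List (Σ i, G i))
    (hl : l.getLast?.map Sigma.fst = some i) :
    ∃ l' : List (Σ i, G i), l'.IsChain (Unmergeable φ) ∧
      l'.getLast?.map Sigma.fst = some i ∧
      (l'.map (pushoutLetter φ)).prod = (l.map (pushoutLetter φ)).prod := by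
  induction hn : l.length using Nat.strong_induction_on generalizing l with
  | _ n ih =>
  by_cases hchain : l.IsChain (Unmergeable φ)
  · exact ⟨l, hchain, hl, rfl⟩
  obtain ⟨y, z, l₁, l₂, rfl, hyz⟩ :
      ∃ y z l₁ l₂, l = l₁ ++ y :: z :: l₂ ∧ ¬Unmergeable φ y z := by
    simpa only [List.isChain_iff_forall_rel_of_append_cons_cons, not_forall, exists_prop]
      using hchain
  obtain ⟨w, hw, hprod⟩ := exists_merge_of_not_unmergeable hyz
  obtain ⟨l', hl'⟩ := ih (l₁ ++ w :: l₂).length (by simp [← hn]) (l₁ ++ w :: l₂)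
    (by cases l₂ <;> simp_all [List.getLast?_append, List.getLast?_cons]) rfl
  exact ⟨l', by simpa [hprod, mul_assoc] using hl'⟩

theorem exists_isReducedWord_mul_of_eq (i : ι) (x : PushoutI φ) :
    ∃ (l : List (Σ i, G i)) (a : G i), IsReducedWord φ l ∧ (∀ y ∈ l.getLast?, y.1 ≠ i) ∧
      (l.map (pushoutLetter φ)).prod * of i a = x := by
  have : Nonempty ι := ⟨i⟩
  obtain ⟨l₀, rfl⟩ := exists_prod_pushoutLetter_eq x
  obtain ⟨l', hchain, hlast, hprod⟩ :=
    exists_isChain_unmergeable (φ := φ) (i := i) (l₀ ++ [⟨i, 1⟩]) (by simp)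
  obtain ⟨⟨j, a⟩, hmem, hj⟩ := Option.map_eq_some_iff.1 hlast
  obtain rfl : j = i := hj
  obtain ⟨l, rfl⟩ := List.getLast?_eq_some_iff.1 hmem
  exact ⟨l, a, .of_isChain_concat hchain,
    fun y hy => ((List.isChain_append.1 hchain).2.2 y hy _ rfl).2,
    by simpa [pushoutLetter] using hprod⟩

theorem mem_range_of_conj_mem_range_of (hφ : ∀ i, Function.Injective (φ i)) {i : ι} {g : G i}
    (hg : ∀ x, ¬IsConj g (φ i x)) {h : PushoutI φ}
    (hh : h * of i g * h⁻¹ ∈ (of (φ := φ) i).range) : h ∈ (of (φ := φ) i).range := by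
  obtain ⟨l, a, hl, hlast, rfl⟩ := exists_isReducedWord_mul_of_eq i h
  have hred := hl.conj (x := ⟨i, a * g * a⁻¹⟩)
    (fun ⟨x, hx⟩ => hg x (isConj_iff.2 ⟨a, hx.symm⟩)) hlast
  have hlen := hred.length_le_one hφ (j := i) (by
    convert hh using 1
    simp only [List.map_append, List.prod_append, List.map_cons, List.prod_cons, List.map_reverse,
      List.map_map, mul_inv_rev, List.prod_inv_reverse, mul_assoc, map_mul, map_inv, pushoutLetter,
      Function.comp_def])
  obtain rfl : l = [] := List.length_eq_zero_iff.1 (by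
    simp only [List.length_append, List.length_cons] at hlen
    lia)
  exact ⟨a, by simp⟩

theorem exists_isConj_of_pushout_of_isOfFinOrder [Nonempty ι]
    (hφ : ∀ i, Function.Injective (φ i)) {x : PushoutI φ} (hx : IsOfFinOrder x) :
    ∃ i g, IsConj (of i g) x := by
  obtain ⟨l, rfl⟩ := exists_prod_pushoutLetter_eq x
  suffices h : ∃ e ∈ Set.range (pushoutLetter φ), IsConj (l.map (pushoutLetter φ)).prod e by
    obtain ⟨_, ⟨⟨i, g⟩, rfl⟩, hconj⟩ := h
    exact ⟨i, g, hconj.symm⟩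
  refine exists_isConj_of_isOfFinOrder_prod
    (R := Unmergeable φ) (pushoutLetter φ) (T := Set.range (pushoutLetter φ))
    (one_mem := ⟨⟨Classical.arbitrary ι, 1⟩, map_one _⟩)
    (prod_ne_one := fun l hne hchain h => ?_)
    (shorten := fun y z l hyz => ?_) (single := fun y _ => ⟨_, ⟨y, rfl⟩, .refl _⟩) l hx
  · obtain ⟨y, l', rfl⟩ := List.exists_cons_of_ne_nil hne
    have hred : IsReducedWord φ (y :: l') := .of_isChain_concat (x := y)
      (List.IsChain.left_of_append (l₂ := l') (by simpa using hchain))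
    exact hne (hred.eq_nil_of_prod_mem_range_base hφ (h ▸ one_mem _))
  · obtain ⟨w, -, hw⟩ := exists_merge_of_not_unmergeable hyz
    refine .inr ⟨w :: l, by simp, ?_⟩
    simp only [List.map_cons, List.prod_cons, hw, mul_assoc, IsConj.refl]

end Pushout

section RootExtension

open Monoid

variable {Γ : Type u} {Q : Type*} [Group Γ] [Group Q] (b : Γ) (p : ℤ)

/-- The factors `Γ` and `ℤ` of the amalgamated product adjoining a root to `Γ`. -/
def RootFactor (Γ : Type u) : Bool → Type u
  | true => Γ
  | false => ULift (Multiplicative ℤ)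

instance (i : Bool) : Group (RootFactor Γ i) :=
  match i with
  | true => inferInstanceAs (Group Γ)
  | false => inferInstanceAs (Group (ULift (Multiplicative ℤ)))

/-- The generator of the infinite cyclic factor. -/
def rootGen (Γ : Type u) [Group Γ] : RootFactor Γ false := ⟨.ofAdd 1⟩

/-- The homomorphisms from `ℤ` along which the factors are amalgamated: `1` goes to `b` and to the
`p`-th power of the generator. -/
def rootMap : (i : Bool) → Multiplicative ℤ →* RootFactor Γ i
  | true => zpowersHom Γ b
  | false => zpowersHom (RootFactor Γ false) (rootGen Γ ^ p)

/-- The group obtained from `Γ` by adjoining a `p`-th root of `b`. -/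
abbrev RootExtension : Type u := PushoutI (rootMap b p)

namespace RootExtension

/-- The inclusion of `Γ`, injective by `RootExtension.of_injective`. -/
def of : Γ →* RootExtension b p := PushoutI.of (φ := rootMap b p) true

/-- The adjoined root. -/
def root : RootExtension b p := PushoutI.of (φ := rootMap b p) false (rootGen Γ)

theorem root_zpow : root b p ^ p = of b p b := by
  have hgen := PushoutI.of_apply_eq_base (rootMap b p) false (.ofAdd 1)
  have hb := PushoutI.of_apply_eq_base (rootMap b p) true (.ofAdd 1)
  rw [show rootMap b p false (.ofAdd 1) = rootGen Γ ^ p from zpow_one _, map_zpow] at hgen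
  rw [show rootMap b p true (.ofAdd 1) = b from zpow_one _] at hb
  exact hgen.trans hb.symm

variable {b p}

theorem rootMap_injective (hb : ¬IsOfFinOrder b) (hp : p ≠ 0) (i : Bool) :
    Function.Injective (rootMap b p i) := by
  cases i with
  | true => exact injective_zpow_iff_not_isOfFinOrder.2 hb
  | false =>
    have hdown (x : Multiplicative ℤ) :
        ULift.down (rootMap b p false x) = ((.ofAdd 1 : Multiplicative ℤ) ^ p) ^ x.toAdd := rfl
    intro x y hxy
    have h := congrArg ULift.down hxy
    rw [hdown, hdown, ← zpow_mul, ← zpow_mul, ← ofAdd_zsmul, ← ofAdd_zsmul] at h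
    have h := Multiplicative.ofAdd.injective h
    simp only [smul_eq_mul, mul_one] at h
    exact Multiplicative.toAdd.injective (mul_left_cancel₀ hp h)

theorem of_injective (hb : ¬IsOfFinOrder b) (hp : p ≠ 0) : Function.Injective (of b p) :=
  PushoutI.of_injective (rootMap_injective hb hp) true

theorem mem_range_of_conj_mem_range (hb : ¬IsOfFinOrder b) (hp : p ≠ 0) {g : Γ}
    (hg : ∀ j : ℤ, ¬IsConj g (b ^ j)) {h : RootExtension b p}
    (hh : h * of b p g * h⁻¹ ∈ (of b p).range) : h ∈ (of b p).range :=
  mem_range_of_conj_mem_range_of (rootMap_injective hb hp) (i := true)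
    (fun j => hg j.toAdd) hh

theorem isConj_of_isConj_of (hb : ¬IsOfFinOrder b) (hp : p ≠ 0) {w g : Γ} (hg : IsOfFinOrder g)
    (h : IsConj (of b p w) (of b p g)) : IsConj w g := by
  obtain rfl | hg1 := eq_or_ne g 1
  · rw [map_one, isConj_one_left, map_eq_one_iff _ (of_injective hb hp)] at h
    rw [h]
  have hconj (j : ℤ) : ¬IsConj g (b ^ j) := fun hj => by
    obtain ⟨n, hn, hpow⟩ := isOfFinOrder_iff_pow_eq_one.1 (hj.isOfFinOrder hg)
    rw [← zpow_natCast, ← zpow_mul] at hpow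
    have hjn : j * n = 0 := injective_zpow_iff_not_isOfFinOrder.2 hb (hpow.trans (zpow_zero b).symm)
    obtain rfl := (mul_eq_zero.1 hjn).resolve_right (by exact_mod_cast hn.ne')
    rw [zpow_zero, isConj_one_left] at hj
    exact hg1 hj
  obtain ⟨c, hc⟩ := isConj_iff.1 h.symm
  obtain ⟨c, rfl⟩ := mem_range_of_conj_mem_range hb hp hconj ⟨w, hc.symm⟩
  rw [← map_inv, ← map_mul, ← map_mul] at hc
  exact (isConj_iff.2 ⟨c, of_injective hb hp hc⟩).symm

theorem exists_lift (f : Γ →* Q) (y : Q) (hy : y ^ p = f b) :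
    ∃ F : RootExtension b p →* Q, (∀ g, F (of b p g) = f g) ∧ F (root b p) = y := by
  let F : ∀ i, RootFactor Γ i →* Q
    | true => f
    | false => (zpowersHom Q y).comp MulEquiv.ulift.toMonoidHom
  have hgen : F false ((rootGen Γ ^ p) ^ (1 : ℤ)) = f b := by
    rw [zpow_one, map_zpow, ← hy]
    exact congrArg (· ^ p) (zpow_one y)
  refine ⟨PushoutI.lift F (zpowersHom Q (f b)) ?_, fun g => PushoutI.lift_of (i := true) F _ _ g,
    (PushoutI.lift_of (i := false) F _ _ _).trans ?_⟩
  · rintro (_ | _)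
    · exact MonoidHom.ext_mint (hgen.trans (zpow_one (f b)).symm)
    · exact MonoidHom.ext_mint ((congrArg f (zpow_one b)).trans (zpow_one (f b)).symm)
  · exact zpow_one y

end RootExtension

end RootExtension

section LetterSubgroup

open FreeGroup (of)

variable {α : Type u} {G : Type*} [Group G] {X Y : Set α} {u : FreeGroup α}

/-- The subgroup of a free group generated by a set of letters. -/
def letterSubgroup (X : Set α) : Subgroup (FreeGroup α) :=
  Subgroup.closure (of '' X)

theorem letterSubgroup_mono (h : X ⊆ Y) : letterSubgroup X ≤ letterSubgroup Y :=
  Subgroup.closure_mono (Set.image_mono h)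

theorem of_mem_letterSubgroup {x : α} (hx : x ∈ X) : of x ∈ letterSubgroup X :=
  Subgroup.subset_closure ⟨x, hx, rfl⟩

theorem map_mem_of_mem_letterSubgroup {f : FreeGroup α →* G} {K : Subgroup G}
    (hf : ∀ x ∈ X, f (of x) ∈ K) (hu : u ∈ letterSubgroup X) : f u ∈ K :=
  (Subgroup.closure_le (K.comap f)).2 (Set.forall_mem_image.2 hf) hu

theorem eq_of_mem_letterSubgroup {f g : FreeGroup α →* G} (hfg : ∀ x ∈ X, f (of x) = g (of x))
    (hu : u ∈ letterSubgroup X) : f u = g u :=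
  MonoidHom.eqOn_closure (Set.forall_mem_image.2 hfg) hu

open Classical in
/-- The endomorphism of a free group which kills the letters outside `X`. -/
noncomputable def retract (X : Set α) : FreeGroup α →* FreeGroup α :=
  FreeGroup.lift fun x => if x ∈ X then of x else 1

theorem retract_of_mem {x : α} (hx : x ∈ X) : retract X (of x) = of x := by
  simp [retract, hx]

theorem retract_mem (X : Set α) (u : FreeGroup α) : retract X u ∈ letterSubgroup X := by
  refine map_mem_of_mem_letterSubgroup (X := Set.univ) (fun x _ => ?_) ?_
  · by_cases hx : x ∈ X <;> simp [retract, hx, of_mem_letterSubgroup, one_mem]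
  · simp [letterSubgroup]

theorem retract_eq_self_iff : retract X u = u ↔ u ∈ letterSubgroup X := by
  refine ⟨fun h => h ▸ retract_mem X u, fun h => ?_⟩
  exact eq_of_mem_letterSubgroup (g := MonoidHom.id _) (fun _ => retract_of_mem) h

theorem retract_mk (X : Set α) [DecidablePred (· ∈ X)] (L : List (α × Bool)) :
    retract X (FreeGroup.mk L) = FreeGroup.mk (L.filter (·.1 ∈ X)) := by
  induction L with
  | nil => exact map_one _
  | cons x L ih =>
    obtain ⟨x, b⟩ := x
    rw [← List.singleton_append, ← FreeGroup.mul_mk, map_mul, ih, List.filter_append,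
      ← FreeGroup.mul_mk]
    congr 1
    by_cases hx : x ∈ X <;> cases b <;>
      simp [retract, hx, FreeGroup.of, FreeGroup.one_eq_mk, FreeGroup.invRev]

theorem mem_letterSubgroup_of_pow_mem {n : ℕ} (hn : n ≠ 0) (h : u ^ n ∈ letterSubgroup X) :
    u ∈ letterSubgroup X :=
  retract_eq_self_iff.1 <| pow_left_injective hn <| by
    simpa using retract_eq_self_iff.2 h

theorem mk_mem_letterSubgroup {L : List (α × Bool)} (hL : ∀ x ∈ L, x.1 ∈ X) :
    FreeGroup.mk L ∈ letterSubgroup X := by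
  classical
  rw [← retract_eq_self_iff, retract_mk, List.filter_eq_self.2 (by simpa using hL)]

end LetterSubgroup

section Essential

variable {α : Type u} {r r' : FreeGroup α} {s : α}

/-- A letter is essential for `r` if every conjugate of `r` involves it. -/
def IsEssential (r : FreeGroup α) (s : α) : Prop :=
  ∀ r', IsConj r r' → r' ∉ letterSubgroup {s}ᶜ

theorem IsEssential.of_isConj (h : IsEssential r s) (hr : IsConj r r') : IsEssential r' s :=
  fun r'' hr' => h r'' (hr.trans hr')

theorem IsEssential.ne_one (h : IsEssential r s) : r ≠ 1 := by
  rintro rfl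
  exact h 1 (.refl 1) (one_mem _)

theorem exists_isConj_forall_isEssential (L : List (α × Bool)) :
    ∃ L' : List (α × Bool), L'.length ≤ L.length ∧ IsConj (FreeGroup.mk L) (FreeGroup.mk L') ∧
      ∀ x ∈ L', IsEssential (FreeGroup.mk L') x.1 := by
  classical
  induction hn : L.length using Nat.strong_induction_on generalizing L with
  | _ n ih =>
  subst hn
  by_cases hL : ∀ x ∈ L, IsEssential (FreeGroup.mk L) x.1
  · exact ⟨L, le_rfl, .refl _, hL⟩
  obtain ⟨x, hx, r', hr', hmem⟩ : ∃ x ∈ L, ∃ r', IsConj (FreeGroup.mk L) r' ∧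
      r' ∈ letterSubgroup {x.1}ᶜ := by
    simpa only [IsEssential, not_forall, not_not, exists_prop] using hL
  -- Deleting the letter `x` fixes `r'`, so it replaces `mk L` by a conjugate.
  have hretract := (retract {x.1}ᶜ).map_isConj hr'
  rw [retract_eq_self_iff.2 hmem, retract_mk] at hretract
  obtain ⟨L', hlen, hconj, hL'⟩ := ih _
    (List.length_filter_lt_length_iff_exists (p := (·.1 ∈ ({x.1}ᶜ : Set α))).2
      ⟨x, hx, by simp⟩) _ rfl
  exact ⟨L', hlen.trans (List.length_filter_le _ _), hr'.trans (hretract.symm.trans hconj), hL'⟩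

end Essential

section ExponentSum

variable {α : Type u} {s x : α} {u : FreeGroup α}

open Classical in
/-- The total exponent of a letter in an element of a free group. -/
noncomputable def exponentSum (s : α) : FreeGroup α →* Multiplicative ℤ :=
  FreeGroup.lift (Pi.mulSingle s (Multiplicative.ofAdd 1))

@[simp]
theorem exponentSum_of_self (s : α) : exponentSum s (FreeGroup.of s) = Multiplicative.ofAdd 1 := by
  simp [exponentSum]

@[simp]
theorem exponentSum_of_ne (h : x ≠ s) : exponentSum s (FreeGroup.of x) = 1 := by
  simp [exponentSum, h]

theorem exponentSum_eq_one (h : u ∈ letterSubgroup {s}ᶜ) : exponentSum s u = 1 :=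
  eq_of_mem_letterSubgroup (g := 1) (fun _ => exponentSum_of_ne) h

theorem isEssential_of_exponentSum_ne (h : exponentSum s u ≠ 1) : IsEssential u s := by
  intro u' hu hmem
  have := (exponentSum s).map_isConj hu
  rw [exponentSum_eq_one hmem, isConj_one_left] at this
  exact h this

end ExponentSum

section OneRelatorGroup

variable {α : Type u} {r r' : FreeGroup α} {G : Type*} [Group G]

/-- The one-relator group with generators `α` and relator `r`. -/
abbrev OneRelatorGroup (r : FreeGroup α) : Type u :=
  FreeGroup α ⧸ Subgroup.normalClosure {r}

theorem relator_mem (r : FreeGroup α) : r ∈ Subgroup.normalClosure {r} :=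
  Subgroup.subset_normalClosure rfl

theorem map_mem_of_mem_normalClosure {f : FreeGroup α →* G} {N : Subgroup G} [N.Normal]
    (hf : f r ∈ N) {u : FreeGroup α} (hu : u ∈ Subgroup.normalClosure {r}) : f u ∈ N :=
  Subgroup.normalClosure_le_normal (N := N.comap f) (Set.singleton_subset_iff.2 hf) hu

theorem normalClosure_eq_of_isConj (h : IsConj r r') :
    Subgroup.normalClosure {r} = Subgroup.normalClosure {r'} := by
  simp only [Subgroup.normalClosure, Group.conjugatesOfSet, Set.biUnion_singleton,
    isConj_iff_conjugatesOf_eq.1 h]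

namespace OneRelatorGroup

/-- The homomorphism out of a one-relator group induced by a homomorphism killing the relator. -/
def lift (f : FreeGroup α →* G) (hf : f r = 1) : OneRelatorGroup r →* G :=
  QuotientGroup.lift _ f fun _ => map_mem_of_mem_normalClosure (N := ⊥) hf

@[simp]
theorem lift_mk (f : FreeGroup α →* G) (hf : f r = 1) (u : FreeGroup α) :
    lift f hf (u : OneRelatorGroup r) = f u := rfl

end OneRelatorGroup

end OneRelatorGroup

section MagnusProperties

variable {α : Type u} {r r' : FreeGroup α} {s : α}

/-- The letters other than `s` freely generate a free subgroup of the one-relator group. -/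
def FreiheitssatzAt (r : FreeGroup α) (s : α) : Prop :=
  Disjoint (letterSubgroup {s}ᶜ) (Subgroup.normalClosure {r})

/-- The conclusions which are proved together by induction on the length of the relator: Magnus'
Freiheitssatz, and the description of the torsion and of the order of a root of the relator. -/
structure MagnusProperties (r : FreeGroup α) : Prop where
  freiheitssatzAt : ∀ s, IsEssential r s → FreiheitssatzAt r s
  exists_commute_isConj : ∀ x : OneRelatorGroup r, IsOfFinOrder x →
    ∃ w, Commute w r ∧ IsConj (w : OneRelatorGroup r) x
  dvd_of_pow_mem : r ≠ 1 → ∀ (V : FreeGroup α) (k j : ℕ), V ^ k = r →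
    V ^ j ∈ Subgroup.normalClosure {r} → k ∣ j

theorem FreiheitssatzAt.eq_one (h : FreiheitssatzAt r s) {u : FreeGroup α}
    (hu : u ∈ letterSubgroup {s}ᶜ) (hr : u ∈ Subgroup.normalClosure {r}) : u = 1 :=
  Subgroup.disjoint_def.1 h hu hr

theorem FreiheitssatzAt.of_isConj (h : FreiheitssatzAt r s) (hr : IsConj r r') :
    FreiheitssatzAt r' s := by
  rwa [FreiheitssatzAt, ← normalClosure_eq_of_isConj hr]

theorem MagnusProperties.of_isConj (h : MagnusProperties r) (hr : IsConj r r') :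
    MagnusProperties r' where
  freiheitssatzAt s hs := (h.freiheitssatzAt s (hs.of_isConj hr.symm)).of_isConj hr
  exists_commute_isConj x hx := by
    have hN := normalClosure_eq_of_isConj hr
    let e : OneRelatorGroup r ≃* OneRelatorGroup r' := QuotientGroup.quotientMulEquivOfEq hN
    obtain ⟨w, hw, hx⟩ := h.exists_commute_isConj _ (e.symm.toMonoidHom.isOfFinOrder hx)
    obtain ⟨c, rfl⟩ := isConj_iff.1 hr
    refine ⟨c * w * c⁻¹, hw.map (MulAut.conj c), ?_⟩
    have he : IsConj (e w) x := by simpa using e.toMonoidHom.map_isConj hx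
    exact .trans (.symm ((QuotientGroup.mk' _).map_isConj (isConj_iff.2 ⟨c, rfl⟩))) he
  dvd_of_pow_mem hr' V k j hV hj := by
    obtain ⟨c, hc⟩ := isConj_iff.1 hr.symm
    refine h.dvd_of_pow_mem (fun h1 => hr' ?_) (c * V * c⁻¹) k j (by rw [conj_pow, hV, hc]) ?_
    · exact isConj_one_right.1 (h1 ▸ hr)
    · rw [normalClosure_eq_of_isConj hr, conj_pow]
      exact Subgroup.normalClosure_normal.conj_mem _ hj c

theorem magnusProperties_one : MagnusProperties (1 : FreeGroup α) where
  freiheitssatzAt s hs := absurd rfl hs.ne_one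
  exists_commute_isConj x hx := by
    obtain ⟨u, rfl⟩ := QuotientGroup.mk_surjective x
    have hu := (OneRelatorGroup.lift (MonoidHom.id (FreeGroup α)) (map_one _)).isOfFinOrder hx
    obtain ⟨n, hn, h⟩ := isOfFinOrder_iff_pow_eq_one.1 hu
    have : u = 1 := pow_left_injective hn.ne' (by simpa using h)
    exact ⟨1, .one_left _, by simp [this]⟩
  dvd_of_pow_mem h := absurd rfl h

theorem dvd_of_pow_mem_normalClosure (h : exponentSum s r ≠ 1) {V : FreeGroup α} {k j : ℕ}
    (hV : V ^ k = r) (hj : V ^ j ∈ Subgroup.normalClosure {r}) : k ∣ j := by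
  subst hV
  obtain ⟨i, hi⟩ := Subgroup.mem_zpowers_iff.1 <| map_mem_of_mem_normalClosure
    (f := exponentSum s) (Subgroup.mem_zpowers _) hj
  rw [map_pow] at h
  have hv : (exponentSum s V).toAdd ≠ 0 := fun h0 => h (by simp [toAdd_eq_zero.1 h0])
  have hij := congrArg Multiplicative.toAdd hi
  simp only [map_pow, toAdd_zpow, toAdd_pow, smul_eq_mul, nsmul_eq_mul, ← mul_assoc] at hij
  exact Int.natCast_dvd_natCast.1 ⟨i, by rw [← mul_right_cancel₀ hv hij, mul_comm]⟩

end MagnusProperties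

section CyclicRelator

open FreeGroup (of)

variable {α : Type u} (a : α) (j : ℤ)

theorem isOfFinOrder_of_zpow_iff {s : α} (hs : s ≠ a) {m : ℤ} :
    IsOfFinOrder ((of s ^ m : FreeGroup α) : OneRelatorGroup (of a ^ j)) ↔ m = 0 := by
  refine ⟨fun h => ?_, by rintro rfl; simp⟩
  obtain ⟨n, hn, h⟩ := isOfFinOrder_iff_pow_eq_one.1 <|
    (OneRelatorGroup.lift (exponentSum s) (by simp [hs.symm])).isOfFinOrder h
  have := congrArg Multiplicative.toAdd h
  simpa [hn.ne'] using this

/-- A one-relator group whose relator is a power of a letter is the free product of the cyclic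
subgroups generated by its letters. -/
theorem exists_isConj_of_zpow_of_isOfFinOrder {x : OneRelatorGroup (of a ^ j)}
    (hx : IsOfFinOrder x) :
    ∃ s, ∃ m : ℤ, IsConj ((of s ^ m : FreeGroup α) : OneRelatorGroup (of a ^ j)) x := by
  let C (s : α) : Subgroup (OneRelatorGroup (of a ^ j)) := Subgroup.zpowers (of s : FreeGroup α)
  let φ (s : α) : PUnit.{u + 1} →* C s := 1
  let f : FreeGroup α →* Monoid.PushoutI φ :=
    FreeGroup.lift fun s => Monoid.PushoutI.of s ⟨(of s : FreeGroup α), Subgroup.mem_zpowers _⟩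
  have hf : f (of a ^ j) = 1 := by
    rw [map_zpow, FreeGroup.lift_apply_of, ← map_zpow]
    refine (congrArg _ (Subtype.ext ?_)).trans (map_one _)
    exact (QuotientGroup.eq_one_iff _).2 (relator_mem _)
  let F := OneRelatorGroup.lift f hf
  let P : Monoid.PushoutI φ →* OneRelatorGroup (of a ^ j) :=
    Monoid.PushoutI.lift (fun s => (C s).subtype) 1 fun _ => MonoidHom.ext fun _ => rfl
  have hPF : P.comp F = MonoidHom.id _ := by
    ext s
    simp [P, F, f, Monoid.PushoutI.lift_of]
  have : Nonempty α := ⟨a⟩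
  obtain ⟨s, ⟨y, m, hm⟩, hs⟩ := exists_isConj_of_pushout_of_isOfFinOrder
    (fun _ => Function.injective_of_subsingleton _) (F.isOfFinOrder hx)
  have hPx : P (F x) = x := DFunLike.congr_fun hPF x
  have hPy : P (Monoid.PushoutI.of s ⟨y, m, hm⟩) = (of s ^ m : FreeGroup α) :=
    (Monoid.PushoutI.lift_of ..).trans hm.symm
  exact ⟨s, m, hPy ▸ hPx ▸ P.map_isConj hs⟩

theorem magnusProperties_of_zpow : MagnusProperties (of a ^ j) where
  freiheitssatzAt s hs := by
    obtain rfl : s = a := by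
      by_contra hsa
      exact hs _ (.refl _) (zpow_mem (of_mem_letterSubgroup (Ne.symm hsa)) j)
    refine Subgroup.disjoint_def.2 fun {u} hu hN => ?_
    rw [← retract_eq_self_iff.2 hu]
    exact map_mem_of_mem_normalClosure (N := ⊥) (by simp [retract]) hN
  exists_commute_isConj x hx := by
    obtain ⟨s, m, hs⟩ := exists_isConj_of_zpow_of_isOfFinOrder a j hx
    by_cases hsa : s = a
    · exact ⟨of s ^ m, hsa ▸ (Commute.refl _).zpow_zpow _ _, hs⟩
    · obtain rfl := (isOfFinOrder_of_zpow_iff a j hsa).1 (hs.symm.isOfFinOrder hx)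
      exact ⟨1, .one_left _, by simpa using hs⟩
  dvd_of_pow_mem hr V k i := by
    refine dvd_of_pow_mem_normalClosure (s := a) fun h => hr ?_
    have := congrArg Multiplicative.toAdd h
    obtain rfl : j = 0 := by simpa using this
    exact zpow_zero _

end CyclicRelator

section MagnusMap

open FreeGroup (of)

variable {α : Type u} {S : Type*} {t : α}

/-- The letters of Magnus' rewriting process; `(s, i)` stands for `t ^ i * s * t ^ (-i)`. -/
abbrev IndexedLetter (t : α) : Type u :=
  {s : α // s ≠ t} × ℤ

/-- The substitution of `t ^ i * s * t ^ (-i)` for the indexed letter `(s, i)`. -/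
def magnusMap (t : α) : FreeGroup (IndexedLetter t) →* FreeGroup α :=
  FreeGroup.lift fun p => of t ^ p.2 * of p.1.1 * (of t ^ p.2)⁻¹

@[simp]
theorem magnusMap_of (s : {s : α // s ≠ t}) (i : ℤ) :
    magnusMap t (of (s, i)) = of t ^ i * of s.1 * (of t ^ i)⁻¹ :=
  FreeGroup.lift_apply_of ..

/-- The action of `ℤ` on words in indexed letters by translation of the indices. -/
def shift (S : Type*) : Multiplicative ℤ →* MulAut (FreeGroup (S × ℤ)) where
  toFun n := FreeGroup.freeGroupCongr ((Equiv.refl S).prodCongr (Equiv.addRight n.toAdd))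
  map_one' := MulEquiv.toMonoidHom_injective <| by ext; simp
  map_mul' m n := MulEquiv.toMonoidHom_injective <| by
    ext ⟨s, i⟩; simp [add_comm, add_left_comm]

@[simp]
theorem shift_of (n : Multiplicative ℤ) (s : S) (i : ℤ) :
    shift S n (of (s, i)) = of (s, i + n.toAdd) := by
  simp [shift]

theorem magnusMap_shift (n : Multiplicative ℤ) (u : FreeGroup (IndexedLetter t)) :
    magnusMap t (shift _ n u) = of t ^ n.toAdd * magnusMap t u * (of t ^ n.toAdd)⁻¹ := by
  suffices h : (magnusMap t).comp (shift _ n).toMonoidHom =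
      (MulAut.conj (of t ^ n.toAdd)).toMonoidHom.comp (magnusMap t) from DFunLike.congr_fun h u
  ext ⟨s, i⟩
  simp [-map_zpow, add_comm i, zpow_add, mul_assoc]

@[simp]
theorem exponentSum_magnusMap (u : FreeGroup (IndexedLetter t)) :
    exponentSum t (magnusMap t u) = 1 := by
  suffices h : (exponentSum t).comp (magnusMap t) = 1 from DFunLike.congr_fun h u
  ext ⟨s, i⟩
  simp [s.2]

open Classical in
/-- The decomposition of the free group on `α` as the semidirect product of the free group on the
indexed letters and the cyclic group generated by `t`. -/
noncomputable def magnusSplit (t : α) :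
    FreeGroup α →* FreeGroup (IndexedLetter t) ⋊[shift _] Multiplicative ℤ :=
  FreeGroup.lift fun s => if h : s = t then .inr (.ofAdd 1) else .inl (of (⟨s, h⟩, 0))

theorem magnusSplit_of_self : magnusSplit t (of t) = .inr (.ofAdd 1) := by
  simp [magnusSplit]

theorem magnusSplit_of_ne (s : {s : α // s ≠ t}) : magnusSplit t (of s.1) = .inl (of (s, 0)) := by
  simp [magnusSplit, s.2]

theorem magnusSplit_magnusMap (u : FreeGroup (IndexedLetter t)) :
    magnusSplit t (magnusMap t u) = .inl u := by
  suffices h : (magnusSplit t).comp (magnusMap t) = SemidirectProduct.inl from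
    DFunLike.congr_fun h u
  ext1 ⟨s, i⟩
  rw [MonoidHom.comp_apply, magnusMap_of, map_mul, map_mul, map_inv, map_zpow, magnusSplit_of_self,
    magnusSplit_of_ne, ← map_zpow, ← map_inv, ← SemidirectProduct.inl_aut]
  simp [-map_zpow]

theorem magnusMap_injective (t : α) : Function.Injective (magnusMap t) := fun u v h =>
  SemidirectProduct.inl_injective <| by rw [← magnusSplit_magnusMap, h, magnusSplit_magnusMap]

theorem eq_magnusMap_mul_zpow (t : α) (g : FreeGroup α) :
    g = magnusMap t (magnusSplit t g).left * of t ^ (exponentSum t g).toAdd := by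
  let θ : FreeGroup (IndexedLetter t) ⋊[shift _] Multiplicative ℤ →* FreeGroup α :=
    SemidirectProduct.lift (magnusMap t) (zpowersHom _ (of t)) fun n => by
      ext1 p; simp [-map_zpow, magnusMap_shift]
  have hθ : θ.comp (magnusSplit t) = MonoidHom.id _ := by
    ext s
    by_cases hs : s = t
    · simp [hs, θ, magnusSplit_of_self]
    · simp [θ, magnusSplit_of_ne ⟨s, hs⟩]
  have hr : SemidirectProduct.rightHom.comp (magnusSplit t) = exponentSum t := by
    ext s
    by_cases hs : s = t
    · simp [hs, magnusSplit_of_self]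
    · simp [hs, magnusSplit_of_ne ⟨s, hs⟩]
  exact (DFunLike.congr_fun hθ g).symm.trans (by rw [← hr]; rfl)

theorem exists_magnusMap_eq {g : FreeGroup α} (hg : exponentSum t g = 1) :
    ∃ u, magnusMap t u = g :=
  ⟨_, by simpa [hg] using (eq_magnusMap_mul_zpow t g).symm⟩

theorem retract_magnusMap {Y : Set α} (ht : t ∈ Y) (u : FreeGroup (IndexedLetter t)) :
    retract Y (magnusMap t u) = magnusMap t (retract {p | p.1.1 ∈ Y} u) := by
  suffices h : (retract Y).comp (magnusMap t) = (magnusMap t).comp (retract {p | p.1.1 ∈ Y}) from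
    DFunLike.congr_fun h u
  ext ⟨s, i⟩
  by_cases hs : s.1 ∈ Y <;> simp [retract, hs, ht]

theorem magnusMap_mem_letterSubgroup_iff {Y : Set α} (ht : t ∈ Y)
    {u : FreeGroup (IndexedLetter t)} :
    magnusMap t u ∈ letterSubgroup Y ↔ u ∈ letterSubgroup {p | p.1.1 ∈ Y} := by
  rw [← retract_eq_self_iff, ← retract_eq_self_iff, retract_magnusMap ht,
    (magnusMap_injective t).eq_iff]

theorem map_magnusMap_letterSubgroup (t : α) (m : ℤ) :
    (letterSubgroup {p : IndexedLetter t | p.2 = m}).map (magnusMap t) =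
      (letterSubgroup {t}ᶜ).map (MulAut.conj (of t ^ m)).toMonoidHom := by
  rw [letterSubgroup, letterSubgroup, MonoidHom.map_closure, MonoidHom.map_closure,
    Set.image_image, Set.image_image]
  congr 1
  ext x
  constructor
  · rintro ⟨⟨s, i⟩, rfl, rfl⟩
    exact ⟨s, s.2, by simp [-map_zpow]⟩
  · rintro ⟨s, hs, rfl⟩
    exact ⟨(⟨s, hs⟩, m), rfl, by simp [-map_zpow]⟩

end MagnusMap

section HNNAlong

variable {K Γ Q : Type*} [Group K] [Group Γ] [Group Q] {f₁ f₂ : K →* Γ}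
  {h₁ : Function.Injective f₁} {h₂ : Function.Injective f₂}

/-- The HNN extension of `Γ` whose stable letter conjugates `f₁ x` into `f₂ x`. -/
abbrev HNNAlong (h₁ : Function.Injective f₁) (h₂ : Function.Injective f₂) : Type _ :=
  HNNExtension Γ f₁.range f₂.range
    ((MonoidHom.ofInjective h₁).symm.trans (MonoidHom.ofInjective h₂))

namespace HNNAlong

theorem t_mul_of (x : K) :
    (HNNExtension.t : HNNAlong h₁ h₂) * .of (f₁ x) = .of (f₂ x) * .t := by
  have h : (MonoidHom.ofInjective h₁).symm (MonoidHom.ofInjective h₁ x) = x :=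
    MulEquiv.symm_apply_apply ..
  simpa [h, MonoidHom.ofInjective_apply] using
    HNNExtension.t_mul_of (φ := (MonoidHom.ofInjective h₁).symm.trans (MonoidHom.ofInjective h₂))
      (MonoidHom.ofInjective h₁ x)

/-- The homomorphism out of an HNN extension induced by a homomorphism of the base and an image
of the stable letter. -/
noncomputable def lift (F : Γ →* Q) (y : Q) (hy : ∀ x, y * F (f₁ x) = F (f₂ x) * y) :
    HNNAlong h₁ h₂ →* Q :=
  HNNExtension.lift F y <| by
    rintro ⟨-, x, rfl⟩
    have h : (MonoidHom.ofInjective h₁).symm ⟨f₁ x, x, rfl⟩ = x :=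
      MulEquiv.symm_apply_apply ..
    simpa [h, MonoidHom.ofInjective_apply] using hy x

theorem lift_of (F : Γ →* Q) (y : Q) (hy : ∀ x, y * F (f₁ x) = F (f₂ x) * y) (g : Γ) :
    lift (h₁ := h₁) (h₂ := h₂) F y hy (HNNExtension.of g) = F g :=
  HNNExtension.lift_of ..

theorem lift_t (F : Γ →* Q) (y : Q) (hy : ∀ x, y * F (f₁ x) = F (f₂ x) * y) :
    lift (h₁ := h₁) (h₂ := h₂) F y hy HNNExtension.t = y :=
  HNNExtension.lift_t ..

end HNNAlong

end HNNAlong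

section MagnusExtension

open FreeGroup (of)

variable {α : Type u} {t : α} {r : FreeGroup (IndexedLetter t)} {a : {s : α // s ≠ t}} {m M : ℤ}

theorem FreiheitssatzAt.mk_comp_injective {K β : Type*} [Group K] {r : FreeGroup β} {s : β}
    (h : FreiheitssatzAt r s) {f : K →* FreeGroup β} (hf : Function.Injective f)
    (hfs : ∀ x, f x ∈ letterSubgroup {s}ᶜ) :
    Function.Injective ((QuotientGroup.mk' (Subgroup.normalClosure {r})).comp f) := by
  refine (injective_iff_map_eq_one _).2 fun x hx => (map_eq_one_iff f hf).1 ?_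
  exact h.eq_one (hfs x) ((QuotientGroup.eq_one_iff _).1 hx)

/-- The indexed letters with index between `m` and `M` if their underlying letter is `a`. -/
def band (a : {s : α // s ≠ t}) (m M : ℤ) : Set (IndexedLetter t) :=
  {p | p.1 = a → p.2 ∈ Set.Icc m M}

theorem mk_comp_subtype_injective (hM : FreiheitssatzAt r (a, M)) :
    Function.Injective ((QuotientGroup.mk' (Subgroup.normalClosure {r})).comp
      (letterSubgroup (band a m (M - 1))).subtype) := by
  refine hM.mk_comp_injective (Subgroup.subtype_injective _) fun u => letterSubgroup_mono ?_ u.2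
  rintro _ hp rfl
  linarith [(hp rfl).2]

theorem mk_comp_shift_injective (hm : FreiheitssatzAt r (a, m)) :
    Function.Injective ((QuotientGroup.mk' (Subgroup.normalClosure {r})).comp
      ((shift _ (.ofAdd 1)).toMonoidHom.comp (letterSubgroup (band a m (M - 1))).subtype)) := by
  refine hm.mk_comp_injective
    ((shift _ _).injective.comp (Subgroup.subtype_injective _)) fun u => ?_
  refine map_mem_of_mem_letterSubgroup (f := (shift _ _).toMonoidHom) (fun p hp => ?_) u.2
  refine (shift_of _ p.1 p.2).symm ▸ of_mem_letterSubgroup fun h => ?_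
  obtain ⟨rfl, h⟩ := Prod.ext_iff.1 h
  have := (hp rfl).1
  simp at h
  omega

/-- The HNN extension of the one-relator group of `r` whose stable letter raises by one the indices
of the letters in `band a m (M - 1)`. -/
abbrev MagnusExtension (hm : FreiheitssatzAt r (a, m)) (hM : FreiheitssatzAt r (a, M)) : Type u :=
  HNNAlong (mk_comp_subtype_injective (m := m) hM) (mk_comp_shift_injective (M := M) hm)

variable (hm : FreiheitssatzAt r (a, m)) (hM : FreiheitssatzAt r (a, M))

theorem t_mul_of_mul_inv_t {s : {s : α // s ≠ t}} {i : ℤ} (h : (s, i) ∈ band a m (M - 1)) :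
    (HNNExtension.t : MagnusExtension hm hM) *
        .of ((of (s, i) : FreeGroup (IndexedLetter t)) : OneRelatorGroup r) * .t⁻¹ =
      .of ((of (s, i + 1) : FreeGroup (IndexedLetter t)) : OneRelatorGroup r) := by
  rw [mul_inv_eq_iff_eq_mul]
  refine (HNNAlong.t_mul_of (⟨of (s, i), of_mem_letterSubgroup h⟩ :
    letterSubgroup (band a m (M - 1)))).trans ?_
  simp

open Classical in
/-- The homomorphism from the free group on `α` to the Magnus extension under which `magnusMap`
becomes the inclusion of the base. -/
noncomputable def toMagnusExtension : FreeGroup α →* MagnusExtension hm hM :=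
  FreeGroup.lift fun s => if h : s = t then .t else .t ^ (-m) *
    .of ((of (⟨s, h⟩, m) : FreeGroup (IndexedLetter t)) : OneRelatorGroup r) * (.t ^ (-m))⁻¹

theorem toMagnusExtension_of_self : toMagnusExtension hm hM (of t) = HNNExtension.t := by
  rw [toMagnusExtension, FreeGroup.lift_apply_of, dif_pos rfl]

theorem toMagnusExtension_of_ne (s : {s : α // s ≠ t}) :
    toMagnusExtension hm hM (of s.1) = .t ^ (-m) *
      .of ((of (s, m) : FreeGroup (IndexedLetter t)) : OneRelatorGroup r) * (.t ^ (-m))⁻¹ := by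
  rw [toMagnusExtension, FreeGroup.lift_apply_of, dif_neg s.2]

theorem toMagnusExtension_magnusMap {u : FreeGroup (IndexedLetter t)}
    (hu : u ∈ letterSubgroup (band a m M)) :
    toMagnusExtension hm hM (magnusMap t u) = .of (u : OneRelatorGroup r) := by
  refine eq_of_mem_letterSubgroup (f := (toMagnusExtension hm hM).comp (magnusMap t))
    (g := HNNExtension.of.comp (QuotientGroup.mk' _)) ?_ hu
  rintro ⟨s, i⟩ hi
  simp only [MonoidHom.comp_apply, QuotientGroup.mk'_apply]
  have hlift : toMagnusExtension hm hM (magnusMap t (of (s, i))) =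
      .t ^ (i - m) * .of ((of (s, m) : FreeGroup (IndexedLetter t)) : OneRelatorGroup r) *
        (.t ^ (i - m))⁻¹ := by
    rw [magnusMap_of, map_mul, map_mul, map_inv, map_zpow, toMagnusExtension_of_self,
      toMagnusExtension_of_ne, sub_eq_add_neg i m, zpow_add]
    group
  rw [hlift]
  clear hlift
  induction i using Int.inductionOn' (b := m) with
  | zero => rw [sub_self, zpow_zero, one_mul, inv_one, mul_one]
  | succ i hmi ih =>
    have hmem : (s, i) ∈ band a m (M - 1) := fun h => ⟨hmi, by have := (hi h).2; omega⟩
    rw [← t_mul_of_mul_inv_t hm hM hmem, ← ih fun h => ⟨hmi, by have := (hi h).2; omega⟩]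
    rw [add_sub_right_comm, add_comm, zpow_add]
    group
  | pred i him ih =>
    have hsa : s ≠ a := fun h => by have := (hi h).1; dsimp at this; omega
    have hconj := t_mul_of_mul_inv_t hm hM (s := s) (i := i - 1) fun h => absurd h hsa
    rw [sub_add_cancel, ← ih fun h => absurd h hsa, mul_inv_eq_iff_eq_mul, ← eq_inv_mul_iff_mul_eq]
      at hconj
    rw [hconj, sub_right_comm, zpow_sub_one]
    group

/-- The homomorphism of one-relator groups induced by `magnusMap`. -/
def magnusHom (r : FreeGroup (IndexedLetter t)) :
    OneRelatorGroup r →* OneRelatorGroup (magnusMap t r) :=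
  OneRelatorGroup.lift ((QuotientGroup.mk' _).comp (magnusMap t))
    ((QuotientGroup.eq_one_iff _).2 (relator_mem _))

theorem magnusHom_mk (u : FreeGroup (IndexedLetter t)) :
    magnusHom r u = (magnusMap t u : OneRelatorGroup (magnusMap t r)) := rfl

theorem of_mul_magnusHom (u : FreeGroup (IndexedLetter t)) :
    (of t : FreeGroup α) * magnusHom r u = magnusHom r (shift _ (.ofAdd 1) u) * (of t) := by
  refine congrArg (QuotientGroup.mk' _) (?_ : of t * magnusMap t u =
    magnusMap t (shift _ (.ofAdd 1) u) * of t)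
  rw [magnusMap_shift, toAdd_ofAdd, zpow_one, inv_mul_cancel_right]

/-- The retraction of the Magnus extension onto the one-relator group of `magnusMap t r`. -/
noncomputable def ofMagnusExtension :
    MagnusExtension hm hM →* OneRelatorGroup (magnusMap t r) :=
  HNNAlong.lift (magnusHom r) (of t : FreeGroup α) fun x => of_mul_magnusHom x.1

theorem ofMagnusExtension_t : ofMagnusExtension hm hM HNNExtension.t = (of t : FreeGroup α) :=
  HNNAlong.lift_t ..

theorem ofMagnusExtension_of (x : OneRelatorGroup r) :
    ofMagnusExtension hm hM (HNNExtension.of x) = magnusHom r x :=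
  HNNAlong.lift_of ..

theorem ofMagnusExtension_toMagnusExtension (u : FreeGroup α) :
    ofMagnusExtension hm hM (toMagnusExtension hm hM u) = u := by
  suffices h : (ofMagnusExtension hm hM).comp (toMagnusExtension hm hM) = QuotientGroup.mk' _ from
    DFunLike.congr_fun h u
  ext s
  rw [MonoidHom.comp_apply, QuotientGroup.mk'_apply]
  by_cases hs : s = t
  · rw [hs, toMagnusExtension_of_self, ofMagnusExtension_t]
  · rw [toMagnusExtension_of_ne hm hM ⟨s, hs⟩, map_mul, map_mul, map_inv, map_zpow,
      ofMagnusExtension_t, ofMagnusExtension_of, magnusHom_mk, magnusMap_of]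
    simp only [QuotientGroup.mk_mul, QuotientGroup.mk_inv, QuotientGroup.mk_zpow]
    group

variable (hr : r ∈ letterSubgroup (band a m M))
include hm hM hr

theorem toMagnusExtension_relator : toMagnusExtension hm hM (magnusMap t r) = 1 := by
  rw [toMagnusExtension_magnusMap hm hM hr, (QuotientGroup.eq_one_iff r).2 (relator_mem r), map_one]

theorem mem_normalClosure_of_magnusMap_mem {u : FreeGroup (IndexedLetter t)}
    (hu : u ∈ letterSubgroup (band a m M))
    (h : magnusMap t u ∈ Subgroup.normalClosure {magnusMap t r}) :
    u ∈ Subgroup.normalClosure {r} := by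
  have h1 := map_mem_of_mem_normalClosure (N := ⊥) (toMagnusExtension_relator hm hM hr) h
  rw [Subgroup.mem_bot, toMagnusExtension_magnusMap hm hM hu] at h1
  exact (QuotientGroup.eq_one_iff u).1 ((map_eq_one_iff _ (HNNExtension.of_injective _)).1 h1)

theorem exists_isConj_magnusHom_of_isOfFinOrder {x : OneRelatorGroup (magnusMap t r)}
    (hx : IsOfFinOrder x) : ∃ y, IsOfFinOrder y ∧ IsConj (magnusHom r y) x := by
  let F := OneRelatorGroup.lift _ (toMagnusExtension_relator hm hM hr)
  obtain ⟨y, hy⟩ := exists_isConj_of_of_isOfFinOrder (F.isOfFinOrder hx)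
  refine ⟨y, ?_, ?_⟩
  · exact (HNNExtension.of_injective _).isOfFinOrder_iff.1
      (hy.symm.isOfFinOrder (F.isOfFinOrder hx))
  · obtain ⟨u, rfl⟩ := QuotientGroup.mk_surjective x
    have := (ofMagnusExtension hm hM).map_isConj hy
    rwa [OneRelatorGroup.lift_mk, ofMagnusExtension_toMagnusExtension,
      ofMagnusExtension_of] at this

end MagnusExtension

section MagnusMapProperties

open FreeGroup (of)

variable {α : Type u} {t : α} {r : FreeGroup (IndexedLetter t)} {a : {s : α // s ≠ t}} {m M : ℤ}

theorem exists_commute_isConj_magnusMap (hm : FreiheitssatzAt r (a, m))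
    (hM : FreiheitssatzAt r (a, M)) (hr : r ∈ letterSubgroup (band a m M))
    (h : MagnusProperties r) {x : OneRelatorGroup (magnusMap t r)} (hx : IsOfFinOrder x) :
    ∃ w, Commute w (magnusMap t r) ∧ IsConj (w : OneRelatorGroup (magnusMap t r)) x := by
  obtain ⟨y, hy, hyx⟩ := exists_isConj_magnusHom_of_isOfFinOrder hm hM hr hx
  obtain ⟨w, hw, hwy⟩ := h.exists_commute_isConj y hy
  exact ⟨magnusMap t w, hw.map _, ((magnusHom r).map_isConj hwy).trans hyx⟩

theorem dvd_of_pow_mem_magnusMap (hm : FreiheitssatzAt r (a, m))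
    (hM : FreiheitssatzAt r (a, M)) (hr : r ∈ letterSubgroup (band a m M))
    (h : MagnusProperties r) (hr1 : r ≠ 1) {V : FreeGroup α} {k j : ℕ}
    (hV : V ^ k = magnusMap t r) (hj : V ^ j ∈ Subgroup.normalClosure {magnusMap t r}) :
    k ∣ j := by
  have hk : k ≠ 0 := by
    rintro rfl
    exact hr1 (magnusMap_injective t (by simpa using hV.symm))
  obtain ⟨V, rfl⟩ : ∃ u, magnusMap t u = V := exists_magnusMap_eq <|
    (pow_eq_one_iff_left hk).1 (by rw [← map_pow, hV, exponentSum_magnusMap])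
  rw [← map_pow] at hV hj
  have hVr := magnusMap_injective t hV
  have hVband := mem_letterSubgroup_of_pow_mem hk (hVr ▸ hr)
  exact h.dvd_of_pow_mem hr1 V k j hVr
    (mem_normalClosure_of_magnusMap_mem hm hM hr (pow_mem hVband j) hj)

theorem freiheitssatzAt_magnusMap (hm : FreiheitssatzAt r (a, m))
    (hM : FreiheitssatzAt r (a, M)) (hr : r ∈ letterSubgroup (band a m M)) :
    FreiheitssatzAt (magnusMap t r) a.1 := by
  refine Subgroup.disjoint_def.2 fun {u} hu hmem => ?_
  obtain ⟨u, rfl⟩ : ∃ v, magnusMap t v = u := exists_magnusMap_eq <|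
    map_mem_of_mem_normalClosure (N := ⊥) (exponentSum_magnusMap r) hmem
  have hne : u ∈ letterSubgroup {p | p.1 ≠ a} := by
    simpa [Subtype.ext_iff] using (magnusMap_mem_letterSubgroup_iff (Ne.symm a.2)).1 hu
  have hur := mem_normalClosure_of_magnusMap_mem hm hM hr
    (letterSubgroup_mono (fun _ hp hpa => absurd hpa hp) hne) hmem
  rw [hm.eq_one (letterSubgroup_mono (fun _ hp => mt (congrArg Prod.fst) hp) hne) hur, map_one]

theorem freiheitssatzAt_magnusMap_self (hm : FreiheitssatzAt r (a, m))
    (hM : FreiheitssatzAt r (a, M)) (hr : r ∈ letterSubgroup (band a m M)) (hmM : m ≤ M)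
    {p : IndexedLetter t} (hp : FreiheitssatzAt r p) (hpm : p.2 ≠ m) :
    FreiheitssatzAt (magnusMap t r) t := by
  refine Subgroup.disjoint_def.2 fun {u} hu hmem => ?_
  obtain ⟨v, hv, huv⟩ : MulAut.conj (of t ^ m) u ∈
      (letterSubgroup {p : IndexedLetter t | p.2 = m}).map (magnusMap t) :=
    map_magnusMap_letterSubgroup t m ▸ ⟨u, hu, rfl⟩
  have hvmem : magnusMap t v ∈ Subgroup.normalClosure {magnusMap t r} :=
    huv ▸ Subgroup.normalClosure_normal.conj_mem _ hmem _
  have hband : {p : IndexedLetter t | p.2 = m} ⊆ band a m M := by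
    rintro q rfl -
    exact ⟨le_rfl, hmM⟩
  have hvr := mem_normalClosure_of_magnusMap_mem hm hM hr (letterSubgroup_mono hband hv) hvmem
  have hv1 := hp.eq_one (letterSubgroup_mono (by rintro _ h rfl; exact hpm h) hv) hvr
  rw [hv1, map_one] at huv
  exact (map_eq_one_iff _ (MulAut.conj (of t ^ m)).injective).1 huv.symm

theorem exists_band_of_mem {L : List (IndexedLetter t × Bool)} {x : IndexedLetter t × Bool}
    (hx : x ∈ L) : ∃ m M, m ≤ M ∧ (∃ y ∈ L, y.1 = (x.1.1, m)) ∧ (∃ y ∈ L, y.1 = (x.1.1, M)) ∧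
      FreeGroup.mk L ∈ letterSubgroup (band x.1.1 m M) := by
  have hfin : {y | y ∈ L ∧ y.1.1 = x.1.1}.Finite := L.finite_toSet.subset fun _ => And.left
  obtain ⟨y, ⟨hyL, hy⟩, hmin⟩ := Set.exists_min_image _ (·.1.2) hfin ⟨x, hx, rfl⟩
  obtain ⟨z, ⟨hzL, hz⟩, hmax⟩ := Set.exists_max_image _ (·.1.2) hfin ⟨x, hx, rfl⟩
  refine ⟨y.1.2, z.1.2, hmin z ⟨hzL, hz⟩, ⟨y, hyL, Prod.ext hy rfl⟩, ⟨z, hzL, Prod.ext hz rfl⟩, ?_⟩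
  exact mk_mem_letterSubgroup fun w hw hwx => ⟨hmin w ⟨hw, hwx⟩, hmax w ⟨hw, hwx⟩⟩

theorem exists_index_ne_of_isEssential_magnusMap {L : List (IndexedLetter t × Bool)}
    (h : IsEssential (magnusMap t (FreeGroup.mk L)) t) (m : ℤ) : ∃ x ∈ L, x.1.2 ≠ m := by
  by_contra! hL
  obtain ⟨u, hu, huL⟩ : magnusMap t (FreeGroup.mk L) ∈
      (letterSubgroup {t}ᶜ).map (MulAut.conj (of t ^ m)).toMonoidHom :=
    map_magnusMap_letterSubgroup t m ▸ ⟨_, mk_mem_letterSubgroup hL, rfl⟩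
  exact h u (isConj_iff.2 ⟨_, huL⟩).symm hu

theorem exists_mem_of_isEssential_magnusMap {L : List (IndexedLetter t × Bool)}
    {s : {s : α // s ≠ t}} (h : IsEssential (magnusMap t (FreeGroup.mk L)) s.1) :
    ∃ x ∈ L, x.1.1 = s := by
  by_contra! hL
  refine h _ (.refl _) ((magnusMap_mem_letterSubgroup_iff (Ne.symm s.2)).2 ?_)
  exact mk_mem_letterSubgroup fun x hx hxs => hL x hx (Subtype.ext hxs)

theorem MagnusProperties.magnusMap_of_forall_isEssential {L : List (IndexedLetter t × Bool)}
    (h : MagnusProperties (FreeGroup.mk L)) (hL : ∀ x ∈ L, IsEssential (FreeGroup.mk L) x.1) :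
    MagnusProperties (magnusMap t (FreeGroup.mk L)) := by
  rcases L.eq_nil_or_concat with rfl | ⟨L', x, hx⟩
  · exact (map_one (magnusMap t)).symm ▸ magnusProperties_one
  have hfrei {x} (hx : x ∈ L) : FreiheitssatzAt (FreeGroup.mk L) x.1 :=
    h.freiheitssatzAt _ (hL x hx)
  replace hx : x ∈ L := by simp [hx]
  obtain ⟨m, M, hmM, ⟨y, hy, hym⟩, ⟨z, hz, hzM⟩, hband⟩ := exists_band_of_mem hx
  have hm := hym ▸ hfrei hy
  have hM := hzM ▸ hfrei hz
  refine ⟨fun s hs => ?_, fun _ => exists_commute_isConj_magnusMap hm hM hband h,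
    fun _ _ _ _ => dvd_of_pow_mem_magnusMap hm hM hband h (hL x hx).ne_one⟩
  obtain rfl | hst := eq_or_ne s t
  · obtain ⟨w, hw, hwm⟩ := exists_index_ne_of_isEssential_magnusMap hs m
    exact freiheitssatzAt_magnusMap_self hm hM hband hmM (hfrei hw) hwm
  · obtain ⟨w, hw, hws⟩ := exists_mem_of_isEssential_magnusMap (s := ⟨s, hst⟩) hs
    obtain ⟨m', M', -, ⟨y', hy', hym'⟩, ⟨z', hz', hzM'⟩, hband'⟩ := exists_band_of_mem hw
    have := freiheitssatzAt_magnusMap (hym' ▸ hfrei hy') (hzM' ▸ hfrei hz') hband'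
    rwa [hws] at this

theorem magnusProperties_magnusMap (L : List (IndexedLetter t × Bool))
    (h : ∀ L' : List (IndexedLetter t × Bool), L'.length ≤ L.length →
      MagnusProperties (FreeGroup.mk L')) :
    MagnusProperties (magnusMap t (FreeGroup.mk L)) := by
  obtain ⟨L', hlen, hconj, hL'⟩ := exists_isConj_forall_isEssential L
  exact ((h L' hlen).magnusMap_of_forall_isEssential hL').of_isConj
    ((magnusMap t).map_isConj hconj.symm)

end MagnusMapProperties

section Rewriting

open FreeGroup (of)

variable {α : Type u} {t : α} {ψ : FreeGroup α →* FreeGroup α} {p : ℤ} {q : α → ℤ}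

open Classical in
theorem exists_map_mk_eq_magnusMap_mul_zpow (ht : ψ (of t) = of t ^ p)
    (hψ : ∀ s, s ≠ t → ψ (of s) = of s * of t ^ q s) (L : List (α × Bool)) :
    ∃ (L' : List (IndexedLetter t × Bool)) (m : ℤ), L'.length = L.countP (·.1 ≠ t) ∧
      ψ (FreeGroup.mk L) = magnusMap t (FreeGroup.mk L') * of t ^ m := by
  induction L using List.reverseRecOn with
  | nil => exact ⟨[], 0, rfl, by simp [← FreeGroup.one_eq_mk]⟩
  | append_singleton L x ih =>
    obtain ⟨L', m, hlen, ih⟩ := ih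
    have htrue {β : Type u} (s : β) : FreeGroup.mk [(s, true)] = of s := rfl
    have hfalse {β : Type u} (s : β) : FreeGroup.mk [(s, false)] = (of s)⁻¹ := rfl
    obtain ⟨s, b⟩ := x
    rw [← FreeGroup.mul_mk, map_mul, ih]
    by_cases hs : s = t
    · subst hs
      cases b
      · exact ⟨L', m - p, by simp [hlen], by simp [hfalse, ht, zpow_sub, mul_assoc]⟩
      · exact ⟨L', m + p, by simp [hlen], by simp [htrue, ht, zpow_add, mul_assoc]⟩
    · cases b
      · refine ⟨L' ++ [((⟨s, hs⟩, m - q s), false)], m - q s, by simp [hlen, hs], ?_⟩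
        simp [← FreeGroup.mul_mk, hfalse, hψ s hs, zpow_sub, mul_assoc]
      · refine ⟨L' ++ [((⟨s, hs⟩, m), true)], m + q s, by simp [hlen, hs], ?_⟩
        simp [← FreeGroup.mul_mk, htrue, hψ s hs, zpow_add, mul_assoc]

theorem magnusProperties_map_of_exponentSum_eq_one (ht : ψ (of t) = of t ^ p)
    (hψ : ∀ s, s ≠ t → ψ (of s) = of s * of t ^ q s) {L : List (α × Bool)}
    (htL : ∃ x ∈ L, x.1 = t) (hexp : exponentSum t (ψ (FreeGroup.mk L)) = 1)
    (h : ∀ L' : List (IndexedLetter t × Bool), L'.length < L.length →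
      MagnusProperties (FreeGroup.mk L')) :
    MagnusProperties (ψ (FreeGroup.mk L)) := by
  classical
  obtain ⟨L', m, hlen, hL'⟩ := exists_map_mk_eq_magnusMap_mul_zpow ht hψ L
  have hlt : L'.length < L.length := by
    rw [hlen]
    refine lt_of_le_of_ne List.countP_le_length fun heq => ?_
    obtain ⟨x, hx, hxt⟩ := htL
    simpa [hxt] using List.countP_eq_length.1 heq x hx
  obtain rfl : m = 0 := by
    simpa [hL'] using congrArg Multiplicative.toAdd hexp
  rw [hL', zpow_zero, mul_one]
  exact magnusProperties_magnusMap L' fun L'' hL'' => h L'' (hL''.trans_lt hlt)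

end Rewriting

section Twist

open FreeGroup (of)

variable {α : Type u} {G : Type*} [Group G] {r : FreeGroup α} {s t : α} {A : ℤ} {q : α → ℤ}

open Classical in
/-- Magnus' substitution of `t ^ A` for `t` and of `s * t ^ q s` for the other letters `s`. -/
noncomputable def twist (t : α) (A : ℤ) (q : α → ℤ) : FreeGroup α →* FreeGroup α :=
  FreeGroup.lift (Function.update (fun s => of s * of t ^ q s) t (of t ^ A))

@[simp]
theorem twist_of_self : twist t A q (of t) = of t ^ A := by
  simp [twist]

@[simp]
theorem twist_of_ne (h : s ≠ t) : twist t A q (of s) = of s * of t ^ q s := by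
  simp [twist, h]

open Classical in
/-- Given an `A`-th root `x` of `f t`, the homomorphism whose composition with `twist t A q`
is `f`. -/
noncomputable def untwist (t : α) (q : α → ℤ) (x : G) (f : FreeGroup α →* G) :
    FreeGroup α →* G :=
  FreeGroup.lift (Function.update (fun s => f (of s) * (x ^ q s)⁻¹) t x)

@[simp]
theorem untwist_of_self (x : G) (f : FreeGroup α →* G) : untwist t q x f (of t) = x := by
  simp [untwist]

@[simp]
theorem untwist_of_ne (x : G) (f : FreeGroup α →* G) (h : s ≠ t) :
    untwist t q x f (of s) = f (of s) * (x ^ q s)⁻¹ := by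
  simp [untwist, h]

theorem untwist_twist {x : G} {f : FreeGroup α →* G} (hx : x ^ A = f (of t)) (u : FreeGroup α) :
    untwist t q x f (twist t A q u) = f u := by
  suffices h : (untwist t q x f).comp (twist t A q) = f from DFunLike.congr_fun h u
  ext z
  by_cases hz : z = t
  · subst hz; simp [hx]
  · simp [hz]

theorem exponentSum_twist (hst : s ≠ t) (u : FreeGroup α) :
    exponentSum s (twist t A q u) = exponentSum s u := by
  suffices h : (exponentSum s).comp (twist t A q) = exponentSum s from DFunLike.congr_fun h u
  ext z
  by_cases hz : z = t
  · subst hz; simp [hst.symm]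
  · simp [hz, hst.symm]

theorem exponentSum_self_twist [DecidableEq α] (hst : s ≠ t) (B : ℤ) (u : FreeGroup α) :
    exponentSum t (twist t A (Pi.single s B) u) = exponentSum t u ^ A * exponentSum s u ^ B := by
  suffices h : (exponentSum t).comp (twist t A (Pi.single s B)) =
      exponentSum t ^ A * exponentSum s ^ B from DFunLike.congr_fun h u
  ext z
  by_cases hz : z = t
  · subst hz; simp [hst.symm]
  · by_cases hzs : z = s
    · subst hzs; simp [hz]
    · simp [hz, hzs]

theorem twist_mem_letterSubgroup (hst : s ≠ t) {u : FreeGroup α} (hu : u ∈ letterSubgroup {s}ᶜ) :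
    twist t A q u ∈ letterSubgroup {s}ᶜ := by
  have ht : of t ∈ letterSubgroup {s}ᶜ := of_mem_letterSubgroup hst.symm
  refine map_mem_of_mem_letterSubgroup (fun z hz => ?_) hu
  by_cases hzt : z = t
  · simpa [hzt] using zpow_mem ht A
  · simpa [hzt] using mul_mem (of_mem_letterSubgroup hz) (zpow_mem ht (q z))

theorem not_isOfFinOrder_of (t : α) : ¬IsOfFinOrder (of t : FreeGroup α) := by
  rw [isOfFinOrder_iff_eq_one]
  exact FreeGroup.of_ne_one t

theorem twist_injective (hA : A ≠ 0) : Function.Injective (twist t A q) := fun u v h =>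
  RootExtension.of_injective (not_isOfFinOrder_of t) hA <| by
    rw [← untwist_twist (RootExtension.root_zpow (of t) A), h, untwist_twist]
    exact RootExtension.root_zpow (of t) A

theorem FreiheitssatzAt.of_twist (h : FreiheitssatzAt (twist t A q r) s) (hst : s ≠ t)
    (hA : A ≠ 0) : FreiheitssatzAt r s := by
  refine Subgroup.disjoint_def.2 fun {u} hu hN => ?_
  refine (map_eq_one_iff _ (twist_injective (t := t) (q := q) hA)).1 ?_
  exact h.eq_one (twist_mem_letterSubgroup hst hu) (map_mem_of_mem_normalClosure (relator_mem _) hN)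

theorem FreiheitssatzAt.not_isOfFinOrder (h : FreiheitssatzAt r s) (hst : s ≠ t) :
    ¬IsOfFinOrder ((of t : FreeGroup α) : OneRelatorGroup r) := by
  rw [isOfFinOrder_iff_pow_eq_one]
  rintro ⟨n, hn, hpow⟩
  refine not_isOfFinOrder_of t (isOfFinOrder_iff_pow_eq_one.2 ⟨n, hn, h.eq_one ?_ ?_⟩)
  · exact pow_mem (of_mem_letterSubgroup hst.symm) n
  · exact (QuotientGroup.eq_one_iff _).1 hpow

theorem exists_twist_eq_of_commute (hA : A ≠ 0) (hr : ∀ j : ℤ, ¬IsConj r (of t ^ j))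
    {w : FreeGroup α} (hw : Commute w (twist t A q r)) : ∃ v, twist t A q v = w := by
  let χ := untwist t q (RootExtension.root (of t) A) (RootExtension.of (of t) A)
  have hχ (u) : χ (twist t A q u) = RootExtension.of (of t) A u :=
    untwist_twist (RootExtension.root_zpow _ _) u
  obtain ⟨F, hF, hFroot⟩ := RootExtension.exists_lift (b := of t) (p := A) (twist t A q) (of t)
    twist_of_self.symm
  have hFχ : F.comp χ = MonoidHom.id _ := by
    ext z
    by_cases hz : z = t
    · subst hz; simp [χ, hFroot]
    · simp [χ, hz, hF, hFroot]
  -- `χ w` centralizes the image of `r`, so it lies in the malnormal base of the root extension.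
  obtain ⟨v, hv⟩ := RootExtension.mem_range_of_conj_mem_range (not_isOfFinOrder_of t) hA hr
    (h := χ w) ⟨r, by rw [← hχ, (hw.map χ).eq, mul_inv_cancel_right]⟩
  exact ⟨v, by rw [← hF, hv]; exact DFunLike.congr_fun hFχ w⟩

theorem FreiheitssatzAt.isConj_of_isConj_twist (h : FreiheitssatzAt r s) (hst : s ≠ t)
    (hA : A ≠ 0) {u v : FreeGroup α} (hv : IsOfFinOrder (v : OneRelatorGroup r))
    (huv : IsConj (twist t A q u : OneRelatorGroup (twist t A q r)) (twist t A q v)) :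
    IsConj (u : OneRelatorGroup r) v := by
  let b : OneRelatorGroup r := (of t : FreeGroup α)
  let χ := untwist t q (RootExtension.root b A)
    ((RootExtension.of b A).comp (QuotientGroup.mk' (Subgroup.normalClosure {r})))
  have hχ (u) : χ (twist t A q u) = RootExtension.of b A u :=
    untwist_twist (RootExtension.root_zpow b A) u
  have hχr : χ (twist t A q r) = 1 := by
    rw [hχ, (QuotientGroup.eq_one_iff r).2 (relator_mem r), map_one]
  have hχuv := (OneRelatorGroup.lift χ hχr).map_isConj huv
  rw [OneRelatorGroup.lift_mk, OneRelatorGroup.lift_mk, hχ, hχ] at hχuv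
  exact RootExtension.isConj_of_isConj_of (h.not_isOfFinOrder hst) hA hv hχuv

theorem exists_commute_isConj_of_twist (h : MagnusProperties (twist t A q r)) (hst : s ≠ t)
    (hA : A ≠ 0) (hs : exponentSum s r ≠ 1) (x : OneRelatorGroup r) (hx : IsOfFinOrder x) :
    ∃ w, Commute w r ∧ IsConj (w : OneRelatorGroup r) x := by
  obtain ⟨u, rfl⟩ := QuotientGroup.mk_surjective x
  let f := (QuotientGroup.mk' (Subgroup.normalClosure {twist t A q r})).comp (twist t A q)
  have hf : f r = 1 := (QuotientGroup.eq_one_iff _).2 (relator_mem _)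
  obtain ⟨w, hw, hwu⟩ := h.exists_commute_isConj (twist t A q u : FreeGroup α)
    ((OneRelatorGroup.lift f hf).isOfFinOrder hx)
  have hr (j : ℤ) : ¬IsConj r (of t ^ j) := fun hj => hs <| by
    simpa [hst.symm] using (exponentSum s).map_isConj hj
  obtain ⟨v, rfl⟩ := exists_twist_eq_of_commute hA hr hw
  have hess : IsEssential (twist t A q r) s :=
    isEssential_of_exponentSum_ne (by rwa [exponentSum_twist hst])
  have hF := (h.freiheitssatzAt s hess).of_twist hst hA
  refine ⟨v, twist_injective hA (by simpa using hw.eq), ?_⟩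
  exact hF.isConj_of_isConj_twist hst hA hx hwu

end Twist

section Induction

variable {α : Type u}

theorem exists_magnusProperties_twist {L : List (α × Bool)} {x y : α × Bool} (hy : y ∈ L)
    (hxy : x.1 ≠ y.1)
    (h : ∀ (β : Type u) (L' : List (β × Bool)), L'.length < L.length →
      MagnusProperties (FreeGroup.mk L')) :
    ∃ q, MagnusProperties
      (twist y.1 (exponentSum x.1 (FreeGroup.mk L)).toAdd q (FreeGroup.mk L)) := by
  classical
  refine ⟨Pi.single x.1 (-(exponentSum y.1 (FreeGroup.mk L)).toAdd),
    magnusProperties_map_of_exponentSum_eq_one twist_of_self (fun _ => twist_of_ne) ⟨y, hy, rfl⟩ ?_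
      (h _)⟩
  rw [exponentSum_self_twist hxy]
  refine Multiplicative.toAdd.injective ?_
  simp only [toAdd_mul, toAdd_zpow, smul_eq_mul, toAdd_one]
  ring

theorem magnusProperties_mk_of_exponentSum_ne_one {L : List (α × Bool)}
    (hne : ∃ x ∈ L, ∃ y ∈ L, x.1 ≠ y.1) (hL : ∀ x ∈ L, exponentSum x.1 (FreeGroup.mk L) ≠ 1)
    (h : ∀ (β : Type u) (L' : List (β × Bool)), L'.length < L.length →
      MagnusProperties (FreeGroup.mk L')) :
    MagnusProperties (FreeGroup.mk L) := by
  obtain ⟨z, hz, z', hz', hne⟩ := hne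
  have hA {x} (hx : x ∈ L) : (exponentSum x.1 (FreeGroup.mk L)).toAdd ≠ 0 := fun h0 =>
    hL x hx (toAdd_eq_zero.1 h0)
  refine ⟨fun s hs => ?_, ?_, fun _ V k j => dvd_of_pow_mem_normalClosure (hL z hz)⟩
  · obtain ⟨x, hx, rfl⟩ : ∃ x ∈ L, x.1 = s := by
      by_contra! hs'
      exact hs _ (.refl _) (mk_mem_letterSubgroup hs')
    obtain ⟨y, hy, hxy⟩ : ∃ y ∈ L, x.1 ≠ y.1 := by
      by_contra! hx'
      exact hne ((hx' z hz).symm.trans (hx' z' hz'))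
    obtain ⟨q, hq⟩ := exists_magnusProperties_twist hy hxy h
    have hess : IsEssential (twist y.1 (exponentSum x.1 (.mk L)).toAdd q (.mk L)) x.1 :=
      isEssential_of_exponentSum_ne (by rw [exponentSum_twist hxy]; exact hL x hx)
    exact (hq.freiheitssatzAt x.1 hess).of_twist hxy (hA hx)
  · obtain ⟨q, hq⟩ := exists_magnusProperties_twist hz' hne h
    exact exists_commute_isConj_of_twist hq hne (hA hz) (hL z hz)

theorem magnusProperties_mk_of_forall_length_lt (L : List (α × Bool))
    (h : ∀ (β : Type u) (L' : List (β × Bool)), L'.length < L.length →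
      MagnusProperties (FreeGroup.mk L')) :
    MagnusProperties (FreeGroup.mk L) := by
  by_cases hne : ∃ x ∈ L, ∃ y ∈ L, x.1 ≠ y.1
  · by_cases hexp : ∃ x ∈ L, exponentSum x.1 (FreeGroup.mk L) = 1
    · obtain ⟨x, hx, hx1⟩ := hexp
      exact magnusProperties_map_of_exponentSum_eq_one (ψ := MonoidHom.id _) (p := 1) (q := 0)
        (by simp) (by simp) ⟨x, hx, rfl⟩ hx1 (h _)
    · push Not at hexp
      exact magnusProperties_mk_of_exponentSum_ne_one hne hexp h
  · push Not at hne
    rcases L.eq_nil_or_concat with rfl | ⟨L', z, rfl⟩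
    · exact magnusProperties_one
    · have hmem := mk_mem_letterSubgroup (X := {z.1}) fun x hx => hne x hx z (by simp)
      rw [letterSubgroup, Set.image_singleton, ← Subgroup.zpowers_eq_closure] at hmem
      obtain ⟨j, hj⟩ := hmem
      exact hj ▸ magnusProperties_of_zpow z.1 j

theorem magnusProperties_mk (L : List (α × Bool)) : MagnusProperties (FreeGroup.mk L) := by
  induction hn : L.length using Nat.strong_induction_on generalizing α with
  | _ n ih =>
    subst hn
    exact magnusProperties_mk_of_forall_length_lt L fun β L' hL' => ih _ hL' L' rfl

theorem magnusProperties (r : FreeGroup α) : MagnusProperties r := by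
  obtain ⟨L, rfl⟩ := Quot.exists_rep r
  exact magnusProperties_mk L

end Induction

section Centralizer

variable {α : Type u} {G : Type u} [Group G]

theorem subsingleton_of_isMulCommutative_freeGroup [IsMulCommutative (FreeGroup α)] :
    Subsingleton α := by
  classical
  refine ⟨fun x y => ?_⟩
  have h := congrArg FreeGroup.toWord (mul_comm' (FreeGroup.of x) (FreeGroup.of y))
  exact (show x = y ∧ y = x by simpa [FreeGroup.of, FreeGroup.toWord_mk] using h).1

theorem isCyclic_of_isFreeGroup_of_isMulCommutative [IsFreeGroup G] [IsMulCommutative G] :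
    IsCyclic G := by
  let e := IsFreeGroup.toFreeGroup G
  have : IsMulCommutative (FreeGroup (IsFreeGroup.Generators G)) :=
    ⟨⟨fun u v => e.symm.injective (by simp only [map_mul, mul_comm' (e.symm u)])⟩⟩
  have := subsingleton_of_isMulCommutative_freeGroup (α := IsFreeGroup.Generators G)
  rcases isEmpty_or_nonempty (IsFreeGroup.Generators G) with hG | ⟨⟨x⟩⟩
  · exact isCyclic_of_injective e.toMonoidHom e.injective
  · have := uniqueOfSubsingleton x
    exact isCyclic_of_injective e.toMonoidHom e.injective

theorem exists_eq_zpow_of_commute {u v : FreeGroup α} (h : Commute u v) :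
    ∃ (z : FreeGroup α) (a b : ℤ), u = z ^ a ∧ v = z ^ b := by
  let K := Subgroup.closure {u, v}
  have : IsMulCommutative K := Subgroup.isMulCommutative_closure <| by
    rintro x (rfl | rfl) y (rfl | rfl)
    exacts [rfl, h, h.symm, rfl]
  obtain ⟨z, hz⟩ := (isCyclic_of_isFreeGroup_of_isMulCommutative (G := K)).exists_generator
  have hzpow {x} (hx : x ∈ ({u, v} : Set (FreeGroup α))) : ∃ a : ℤ, x = (z : FreeGroup α) ^ a := by
    obtain ⟨a, ha⟩ := hz ⟨x, Subgroup.subset_closure hx⟩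
    exact ⟨a, congrArg Subtype.val ha.symm⟩
  obtain ⟨a, ha⟩ := hzpow (x := u) (by simp)
  obtain ⟨b, hb⟩ := hzpow (x := v) (by simp)
  exact ⟨z, a, b, ha, hb⟩

variable {V : FreeGroup α} {k : ℕ}

theorem commute_of_commute_pow {w : FreeGroup α} (hk : k ≠ 0) (h : Commute w (V ^ k)) :
    Commute w V := by
  refine mul_inv_eq_iff_eq_mul.1 (pow_left_injective hk ?_)
  simp only [conj_pow, h.eq, mul_inv_cancel_right]

theorem ne_one_of_forall_ne_pow (hV : ∀ (W : FreeGroup α) (m : ℕ), 2 ≤ m → V ≠ W ^ m) :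
    V ≠ 1 := by
  simpa using hV 1 2 le_rfl

theorem isUnit_of_zpow_eq (hV : ∀ (W : FreeGroup α) (m : ℕ), 2 ≤ m → V ≠ W ^ m)
    {z : FreeGroup α} {b : ℤ} (hb : V = z ^ b) : IsUnit b := by
  rw [Int.isUnit_iff_natAbs_eq]
  have h0 : b ≠ 0 := by
    rintro rfl
    exact ne_one_of_forall_ne_pow hV (by simpa using hb)
  have h2 : b.natAbs < 2 := by
    by_contra! h2
    obtain h | h := b.natAbs_eq
    · exact hV z _ h2 (by rw [hb, ← zpow_natCast, ← h])
    · refine hV z⁻¹ _ h2 ?_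
      rw [hb, inv_pow, ← zpow_natCast, ← zpow_neg, ← h]
  omega

theorem exists_eq_zpow_of_commute_pow (hk : k ≠ 0)
    (hV : ∀ (W : FreeGroup α) (m : ℕ), 2 ≤ m → V ≠ W ^ m) {w : FreeGroup α}
    (hw : Commute w (V ^ k)) : ∃ m : ℤ, w = V ^ m := by
  obtain ⟨z, a, b, rfl, hb⟩ := exists_eq_zpow_of_commute (commute_of_commute_pow hk hw)
  refine ⟨b * a, ?_⟩
  rw [hb, ← zpow_mul, ← mul_assoc, Int.isUnit_mul_self (isUnit_of_zpow_eq hV hb), one_mul]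

end Centralizer

end OneRelator

theorem one_relator_torsion_general {α : Type*} (V : FreeGroup α) (k : ℕ) (hk : k ≠ 0)
    (hV : ∀ (W : FreeGroup α) (m : ℕ), 2 ≤ m → V ≠ W ^ m) :
    orderOf ((QuotientGroup.mk' (Subgroup.normalClosure {V ^ k})) V) = k ∧
    ∀ g : FreeGroup α ⧸ Subgroup.normalClosure {V ^ k}, IsOfFinOrder g →
      ∃ (h : FreeGroup α ⧸ Subgroup.normalClosure {V ^ k}) (m : ℤ),
        g = h * ((QuotientGroup.mk' (Subgroup.normalClosure {V ^ k})) V) ^ m * h⁻¹ := by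
  have hVk := OneRelator.magnusProperties (V ^ k)
  have hmem (j : ℕ) : QuotientGroup.mk' (Subgroup.normalClosure {V ^ k}) V ^ j = 1 ↔
      V ^ j ∈ Subgroup.normalClosure {V ^ k} := by
    rw [← map_pow]
    exact QuotientGroup.eq_one_iff (V ^ j)
  refine ⟨Nat.dvd_antisymm ?_ ?_, fun g hg => ?_⟩
  · exact orderOf_dvd_of_pow_eq_one ((hmem k).2 (OneRelator.relator_mem _))
  · have hne : V ^ k ≠ 1 := (pow_eq_one_iff_left hk).not.2 (OneRelator.ne_one_of_forall_ne_pow hV)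
    exact hVk.dvd_of_pow_mem hne V k _ rfl ((hmem _).1 (pow_orderOf_eq_one _))
  · obtain ⟨w, hw, hwg⟩ := hVk.exists_commute_isConj g hg
    obtain ⟨m, rfl⟩ := OneRelator.exists_eq_zpow_of_commute_pow hk hV hw
    obtain ⟨h, hh⟩ := isConj_iff.1 hwg
    exact ⟨h, m, hh.symm⟩

/-- **Karrass–Magnus–Solitar.** In a one-relator group whose relator is `V^k` with
`k > 1` and `V` not a proper power, the image of `V` has order exactly `k` and every
element of finite order is a conjugate of a power of `V`. -/
theorem one_relator_torsion {α : Type} (V : FreeGroup α) (k : ℕ) (hk : 1 < k)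
    (hV : ∀ (W : FreeGroup α) (m : ℕ), 2 ≤ m → V ≠ W ^ m) :
    orderOf ((QuotientGroup.mk' (Subgroup.normalClosure {V ^ k})) V) = k ∧
    ∀ g : FreeGroup α ⧸ Subgroup.normalClosure {V ^ k}, IsOfFinOrder g →
      ∃ (h : FreeGroup α ⧸ Subgroup.normalClosure {V ^ k}) (m : ℤ),
        g = h * ((QuotientGroup.mk' (Subgroup.normalClosure {V ^ k})) V) ^ m * h⁻¹ :=
  one_relator_torsion_general V k (by lia) hV
end

section
/- Let F be a free group, let p ∈ F be a primitive element (a member of some basis of F), and let H be a locally indicable group. If r ∈ F ∗ H is not conjugate to an element of F, not conjugate to an element of H, and not conjugate to an element of ⟨p⟩ ∗ H, then ⟨p⟩ ∗ H embeds canonically into (F ∗ H)/⟨⟨r⟩⟩. -/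
open Monoid

/-- A group is locally indicable if every non-trivial finitely generated subgroup
surjects onto `ℤ`. -/
def LocallyIndicable (G : Type) [Group G] : Prop :=
  ∀ H : Subgroup G, H ≠ ⊥ → H.FG →
    ∃ f : H →* Multiplicative ℤ, Function.Surjective f

/-- An element of a free group is primitive if it is part of a free basis. -/
def IsPrimitive {α : Type} (p : FreeGroup α) : Prop :=
  ∃ (β : Type) (e : FreeGroup (Option β) ≃* FreeGroup α), e (FreeGroup.of none) = p

/-!
A free basis containing `p` presents `F ∗ H` as `H` with free variables adjoined, one of them `p`.
If a cyclically reduced relator involves a variable `t` other than `p`, absorb all other variables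
into the coefficient group: it stays locally indicable, and the relator becomes an equation in the
single unknown `t`. Solving it in a group containing the coefficients yields a homomorphism that
kills the relator and is injective on the coefficients, in particular on `⟨p⟩ ∗ H`.

Such equations are solved by induction on the number of occurrences of `t`. A `ℤ`-valued character
of the subgroup generated by the coefficients provides powers of a new letter `z`, commuting with
the coefficient group, by which the coefficients and `t` can be multiplied so that the total
exponent of `z` vanishes. Collecting the powers of `z` turns the equation into a word in the
conjugates `z ^ k * t * z ^ (-k)`, at least two of which occur, hence each of them fewer times than
`t` did. By induction each extreme conjugate satisfies a Freiheitssatz, so the `z`-translates of the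
word form a staggered family of relators, whose quotient is built up by amalgamation and contains
the coefficient group.
-/

open Function

namespace LocallyIndicable

variable {G Q : Type} [Group G] [Group Q]

theorem exists_surjective_of_ne_one [Group.FG G] (hQ : LocallyIndicable Q) {f : G →* Q}
    (hf : f ≠ 1) : ∃ g : G →* Multiplicative ℤ, Surjective g := by
  obtain ⟨g, hg⟩ := hQ f.range (by rwa [Ne, MonoidHom.range_eq_bot_iff])
    ((Group.fg_iff_subgroup_fg _).1 (Group.fg_range f))
  exact ⟨g.comp f.rangeRestrict, hg.comp f.rangeRestrict_surjective⟩

theorem of_injective (hQ : LocallyIndicable Q) {f : G →* Q} (hf : Injective f) :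
    LocallyIndicable G := by
  intro S hS hfg
  have : Group.FG S := (Group.fg_iff_subgroup_fg S).2 hfg
  refine hQ.exists_surjective_of_ne_one (f := f.comp S.subtype) fun h => hS ?_
  refine (Subgroup.eq_bot_iff_forall S).2 fun x hx => hf ?_
  rw [map_one]
  exact DFunLike.congr_fun h ⟨x, hx⟩

theorem of_ker {f : G →* Q} (hQ : LocallyIndicable Q) (hK : LocallyIndicable f.ker) :
    LocallyIndicable G := by
  intro S hS hfg
  have : Group.FG S := (Group.fg_iff_subgroup_fg S).2 hfg
  by_cases hf : f.comp S.subtype = 1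
  · let i : S →* f.ker := S.subtype.codRestrict f.ker fun x => DFunLike.congr_fun hf x
    have hi : Injective i := fun x y h => Subtype.ext (congrArg (fun z : f.ker => (z : G)) h)
    obtain ⟨x, hx⟩ := S.ne_bot_iff_exists_ne_one.1 hS
    refine hK.exists_surjective_of_ne_one (f := i) fun h => hx (hi ?_)
    rw [h, map_one, MonoidHom.one_apply]
  · exact hQ.exists_surjective_of_ne_one hf

theorem semidirectProduct {φ : Q →* MulAut G} (hG : LocallyIndicable G)
    (hQ : LocallyIndicable Q) : LocallyIndicable (G ⋊[φ] Q) := by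
  refine hQ.of_ker (f := SemidirectProduct.rightHom) ?_
  rw [← SemidirectProduct.range_inl_eq_ker_rightHom]
  exact hG.of_injective
    (f := (MonoidHom.ofInjective SemidirectProduct.inl_injective).symm.toMonoidHom)
    (MulEquiv.injective _)

theorem freeGroup (X : Type) : LocallyIndicable (FreeGroup X) := by
  intro S hS _
  let e : S ≃* FreeGroup (IsFreeGroup.Generators S) := IsFreeGroup.toFreeGroup S
  have : Nontrivial S := (Subgroup.nontrivial_iff_ne_bot S).2 hS
  obtain ⟨x⟩ : Nonempty (IsFreeGroup.Generators S) := by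
    by_contra h
    rw [not_nonempty_iff] at h
    exact not_subsingleton S e.toEquiv.subsingleton
  refine ⟨(FreeGroup.lift fun _ => Multiplicative.ofAdd 1).comp e.toMonoidHom, fun n => ?_⟩
  exact ⟨e.symm (FreeGroup.of x ^ n.toAdd), by simp [← ofAdd_zsmul]⟩

/-- The character `ψ` is recorded as an integer weight `w` on all of `G`, so that it can be
evaluated at the coefficients of a word without membership proofs. -/
theorem exists_character (hG : LocallyIndicable G) {s : Set G} (hs : s.Finite) {b : G}
    (hb : b ∈ s) (hb1 : b ≠ 1) :
    ∃ (ψ : Subgroup.closure s →* Multiplicative ℤ) (w : G → ℤ),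
      (∀ x, ψ x = .ofAdd (w x)) ∧ ∃ c ∈ s, w c ≠ 0 := by
  obtain ⟨ψ, hψ⟩ := hG (Subgroup.closure s)
    (fun h => hb1 ((Subgroup.closure_eq_bot_iff.1 h) hb))
    ((Subgroup.fg_iff _).2 ⟨s, rfl, hs⟩)
  let w : G → ℤ := extend (Subtype.val : Subgroup.closure s → G) (fun x => (ψ x).toAdd) 0
  have hw : ∀ x : Subgroup.closure s, ψ x = .ofAdd (w x) := fun x =>
    (congrArg Multiplicative.ofAdd (Subtype.val_injective.extend_apply _ _ x)).symm
  refine ⟨ψ, w, hw, ?_⟩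
  by_contra! h0
  have h1 : ψ = 1 := MonoidHom.eq_of_eqOn_dense Subgroup.closure_closure_coe_preimage
    fun x hx => by rw [hw, h0 x hx]; rfl
  obtain ⟨x, hx⟩ := hψ (.ofAdd 1)
  rw [h1] at hx
  exact zero_ne_one (Multiplicative.ofAdd.injective hx)

end LocallyIndicable

universe u v

theorem exists_conj_extension {A : Type*} {G : Type u} [Group A] [Group G] {f₁ f₂ : A →* G}
    (h₁ : Injective f₁) (h₂ : Injective f₂) :
    ∃ (E : Type u) (_ : Group E) (g : G →* E) (t : E), Injective g ∧
      ∀ a, t * g (f₁ a) * t⁻¹ = g (f₂ a) := by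
  let φ : f₁.range ≃* f₂.range := (MonoidHom.ofInjective h₁).symm.trans (MonoidHom.ofInjective h₂)
  refine ⟨HNNExtension G _ _ φ, inferInstance, HNNExtension.of, HNNExtension.t,
    HNNExtension.of_injective φ, fun a => ?_⟩
  have h := HNNExtension.equiv_eq_conj (φ := φ) (MonoidHom.ofInjective h₁ a)
  rw [MulEquiv.trans_apply, MulEquiv.symm_apply_apply] at h
  exact h.symm

theorem exists_amalgam {A : Type*} {G₁ : Type u} {G₂ : Type v} [Group A] [Group G₁] [Group G₂]
    {f₁ : A →* G₁} {f₂ : A →* G₂} (h₁ : Injective f₁) (h₂ : Injective f₂) :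
    ∃ (E : Type max u v) (_ : Group E) (g₁ : G₁ →* E) (g₂ : G₂ →* E),
      Injective g₁ ∧ Injective g₂ ∧ ∀ a, g₁ (f₁ a) = g₂ (f₂ a) := by
  obtain ⟨E, _, g, t, hg, ht⟩ := exists_conj_extension
    (f₁ := (Coprod.inl : G₁ →* Coprod G₁ G₂).comp f₁) (f₂ := (Coprod.inr).comp f₂)
    (Coprod.inl_injective.comp h₁) (Coprod.inr_injective.comp h₂)
  exact ⟨E, _, (MulAut.conj t).toMonoidHom.comp (g.comp Coprod.inl), g.comp Coprod.inr,
    (MulAut.conj t).injective.comp (hg.comp Coprod.inl_injective),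
    hg.comp Coprod.inr_injective, ht⟩

theorem exists_rotation_of_not_chain {α : Type*} {r : α → α → Prop} {l : List α}
    (h : ¬ (l : Cycle α).Chain r) :
    ∃ p q l₁ l₂, l₁ ++ [p] = q :: l₂ ∧ l ~r q :: l₂ ∧ ¬ r p q := by
  cases l with
  | nil => exact absurd (Cycle.Chain.nil r) h
  | cons a l =>
    rw [Cycle.chain_coe_cons, List.isChain_iff_forall_rel_of_append_cons_cons] at h
    push Not at h
    obtain ⟨p, q, m, n, h, hpq⟩ := h
    cases m with
    | nil =>
      obtain ⟨rfl, hl⟩ := List.cons_eq_cons.1 h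
      exact ⟨a, q, l, n, hl, hl ▸ List.isRotated_append (l := [a]), hpq⟩
    | cons b m =>
      obtain ⟨rfl, hl⟩ := List.cons_eq_cons.1 h
      rcases n.eq_nil_or_concat' with rfl | ⟨n, c, rfl⟩
      · obtain ⟨rfl, haq⟩ := List.append_inj' (hl.trans (List.append_cons m p [q])) rfl
        obtain rfl := List.singleton_inj.1 haq
        exact ⟨p, a, a :: m, m ++ [p], rfl, .refl _, hpq⟩
      · have hl' : l ++ [a] = (m ++ p :: q :: n) ++ [c] := hl.trans (by simp)
        obtain ⟨rfl, -⟩ := List.append_inj' hl' rfl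
        refine ⟨p, q, q :: n ++ a :: m, n ++ a :: (m ++ [p]), by simp, ?_, hpq⟩
        simpa using List.isRotated_append (l := a :: (m ++ [p])) (l' := q :: n)

theorem rel_of_chain_of_append_eq {α : Type*} {r : α → α → Prop} {p q : α} {l₁ l₂ : List α}
    (h : l₁ ++ [p] = q :: l₂) (hr : (↑(l₁ ++ [p]) : Cycle α).Chain r) : r p q := by
  rw [← Cycle.coe_cons_eq_coe_append, Cycle.chain_coe_cons, h] at hr
  exact (List.isChain_cons_cons.1 hr).1

theorem forall_mem_of_chain {α : Type*} {P : α → Prop} {l : List α}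
    (h : (l : Cycle α).Chain fun _ b => P b) : ∀ b ∈ l, P b := by
  have : IsTrans α fun _ b => P b := ⟨fun _ _ _ _ hc => hc⟩
  exact fun b hb => Cycle.chain_iff_pairwise.1 h b hb b hb

theorem exists_mem_eq_of_chain_ne {α : Type*} {s : α → Bool} {l : List α} (hl : l ≠ [])
    (hs : (l : Cycle α).Chain fun a b => s a ≠ s b) (e : Bool) : ∃ a ∈ l, s a = e := by
  obtain ⟨q, l₂, rfl⟩ := List.exists_cons_of_ne_nil hl
  obtain ⟨l₁, p, hpq⟩ := (q :: l₂).eq_nil_or_concat'.resolve_left hl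
  rw [hpq] at hs
  have hne := rel_of_chain_of_append_eq hpq.symm hs
  by_cases he : s q = e
  · exact ⟨q, List.mem_cons_self, he⟩
  · exact ⟨p, by simp [hpq], by rw [Bool.eq_not_iff.2 hne, Bool.eq_not_iff.2 he, Bool.not_not]⟩

theorem isConj_prod_of_isRotated {G : Type*} [Group G] {l l' : List G} (h : l ~r l') :
    IsConj l.prod l'.prod := by
  obtain ⟨n, hn, rfl⟩ := List.isRotated_iff_mod.1 h
  rw [List.rotate_eq_drop_append_take hn, List.prod_append, isConj_iff]
  refine ⟨(l.take n).prod⁻¹, ?_⟩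
  rw [inv_inv, ← List.prod_take_mul_prod_drop l n, inv_mul_cancel_left]

theorem normalClosure_singleton_eq_of_isConj {G : Type*} [Group G] {x y : G} (h : IsConj x y) :
    Subgroup.normalClosure {x} = Subgroup.normalClosure {y} := by
  simp only [Subgroup.normalClosure, Group.conjugatesOfSet, Set.biUnion_singleton,
    isConj_iff_conjugatesOf_eq.1 h]

theorem disjoint_normalClosure_of_eqOn {G E : Type*} [Group G] [Group E] {f g : G →* E}
    {R : Set G} {K : Subgroup G} (hf : Injective f) (hR : ∀ r ∈ R, g r = 1)
    (hfg : Set.EqOn g f K) : Disjoint (Subgroup.normalClosure R) K := by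
  refine Disjoint.mono_left (Subgroup.normalClosure_le_normal (N := g.ker) hR) ?_
  refine Subgroup.disjoint_def.2 fun {x} hx hxK => hf ?_
  rw [← hfg hxK, map_one, MonoidHom.mem_ker.1 hx]

theorem injOn_mk'_of_disjoint {G : Type*} [Group G] {N K : Subgroup G} [N.Normal]
    (h : Disjoint N K) : Set.InjOn (QuotientGroup.mk' N) K := by
  intro x hx y hy hxy
  have hN : x⁻¹ * y ∈ N := QuotientGroup.eq.1 hxy
  exact inv_mul_eq_one.1 (Subgroup.disjoint_def.1 h hN (K.mul_mem (K.inv_mem hx) hy))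

theorem normalClosure_inl_le {N G : Type*} [Group N] [Group G] {φ : G →* MulAut N} (n : N) :
    Subgroup.normalClosure {(SemidirectProduct.inl n : N ⋊[φ] G)} ≤
      (Subgroup.normalClosure (Set.range fun g => φ g n)).map SemidirectProduct.inl := by
  refine (Subgroup.closure_le _).2 fun x hx => ?_
  obtain ⟨_, rfl, hconj⟩ := Group.mem_conjugatesOfSet_iff.1 hx
  obtain ⟨p, rfl⟩ := isConj_iff.1 hconj
  refine ⟨p.left * φ p.right n * p.left⁻¹, ?_, ?_⟩
  · exact Subgroup.normalClosure_normal.conj_mem _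
      (Subgroup.subset_normalClosure (Set.mem_range_self p.right)) p.left
  · conv_rhs => rw [← SemidirectProduct.inl_left_mul_inr_right p]
    simp only [map_mul, map_inv, SemidirectProduct.inl_aut, mul_inv_rev, mul_assoc]

theorem exists_int_relation (x y : ℤ) : ∃ c m : ℤ, (c ≠ 0 ∨ m ≠ 0) ∧ c * x + m * y = 0 := by
  by_cases hy : y = 0
  · exact ⟨0, 1, by simp [hy]⟩
  · exact ⟨y, -x, .inl hy, by ring⟩

section Telescoping

variable {α G : Type*} [Group G] {f g A A' : α → G}

theorem prod_map_eq_of_telescoping {l : List α} (hfg : ∀ x ∈ l, f x = A x * g x * (A' x)⁻¹) :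
    ∀ {x z : α}, (x :: (l ++ [z])).IsChain (fun x y => A' x = A y) →
      (l.map f).prod = A' x * (l.map g).prod * (A z)⁻¹ := by
  induction l with
  | nil => intro x z h; simp_all
  | cons y l ih =>
    intro x z h
    rw [List.cons_append, List.isChain_cons_cons] at h
    rw [List.map_cons, List.prod_cons, List.map_cons, List.prod_cons,
      ih (fun y hy => hfg y (List.mem_cons_of_mem _ hy)) h.2, hfg y List.mem_cons_self, h.1]
    group

theorem isConj_prod_map_of_telescoping {l : List α}
    (hfg : ∀ x ∈ l, f x = A x * g x * (A' x)⁻¹)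
    (hA : (l : Cycle α).Chain fun x y => A' x = A y) :
    IsConj (l.map f).prod (l.map g).prod := by
  cases l with
  | nil => exact .refl _
  | cons x l =>
    rw [Cycle.chain_coe_cons] at hA
    refine isConj_iff.2 ⟨(A x)⁻¹, ?_⟩
    rw [List.map_cons, List.prod_cons, List.map_cons, List.prod_cons, hfg x List.mem_cons_self,
      prod_map_eq_of_telescoping (fun y hy => hfg y (List.mem_cons_of_mem _ hy)) hA]
    group

end Telescoping

/-- The action of the permutations of a basis on the free group by automorphisms. -/
def freeGroupPermAut (X : Type*) : Equiv.Perm X →* MulAut (FreeGroup X) where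
  toFun := FreeGroup.freeGroupCongr
  map_one' := FreeGroup.freeGroupCongr_refl
  map_mul' σ τ := (FreeGroup.freeGroupCongr_trans τ σ).symm

/-! ### Adjoining free variables -/

/-- The free product of `B` with the free group on `ι`, seen as the group obtained from the
coefficient group `B` by adjoining a family of free variables. -/
abbrev FreeAdjoin (B : Type u) (ι : Type v) [Group B] : Type max u v :=
  Coprod (FreeGroup ι) B

namespace FreeAdjoin

variable {B ι D : Type*} [Group B] [Group D]

/-- The inclusion of the coefficient group. -/
def const : B →* FreeAdjoin B ι := Coprod.inr

/-- The adjoined variable with index `i`. -/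
def var (i : ι) : FreeAdjoin B ι := Coprod.inl (FreeGroup.of i)

/-- The universal property: extend `f` by sending the variable `i` to `x i`. -/
def lift (f : B →* D) (x : ι → D) : FreeAdjoin B ι →* D := Coprod.lift (FreeGroup.lift x) f

@[simp]
theorem lift_const (f : B →* D) (x : ι → D) (b : B) : lift f x (const b) = f b :=
  Coprod.lift_apply_inr _ _ _

@[simp]
theorem lift_var (f : B →* D) (x : ι → D) (i : ι) : lift f x (var i) = x i := by
  simp only [lift, var, Coprod.lift_apply_inl, FreeGroup.lift_apply_of]

theorem hom_ext {f g : FreeAdjoin B ι →* D} (hc : ∀ b, f (const b) = g (const b))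
    (hv : ∀ i, f (var i) = g (var i)) : f = g :=
  Coprod.hom_ext (FreeGroup.ext_hom _ _ hv) (MonoidHom.ext hc)

/-- The subgroup generated by the coefficient group and the variables from `S`. -/
def supported (S : Set ι) : Subgroup (FreeAdjoin B ι) :=
  Subgroup.closure (var '' S ∪ Set.range const)

theorem const_mem_supported (S : Set ι) (b : B) : const b ∈ supported (B := B) S :=
  Subgroup.subset_closure (.inr ⟨b, rfl⟩)

theorem var_mem_supported {S : Set ι} {i : ι} (hi : i ∈ S) : var i ∈ supported (B := B) S :=
  Subgroup.subset_closure (.inl ⟨i, hi, rfl⟩)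

theorem supported_mono {S T : Set ι} (h : S ⊆ T) : supported (B := B) S ≤ supported T :=
  Subgroup.closure_mono (Set.union_subset_union_left _ (Set.image_mono h))

theorem eqOn_supported {f g : FreeAdjoin B ι →* D} {S : Set ι}
    (hc : ∀ b, f (const b) = g (const b)) (hv : ∀ i ∈ S, f (var i) = g (var i)) :
    Set.EqOn f g (supported S : Subgroup (FreeAdjoin B ι)) := by
  refine MonoidHom.eqOn_closure ?_
  rintro _ (⟨i, hi, rfl⟩ | ⟨b, rfl⟩)
  exacts [hv i hi, hc b]

theorem const_injective : Injective (const : B →* FreeAdjoin B ι) := Coprod.inr_injective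

/-- The action of the permutations of the variables by automorphisms fixing the coefficients. -/
def permAut : Equiv.Perm ι →* MulAut (FreeAdjoin B ι) where
  toFun σ := MulEquiv.coprodCongr (freeGroupPermAut ι σ) (MulEquiv.refl B)
  map_one' := MulEquiv.toMonoidHom_injective (hom_ext (fun _ => rfl) fun _ => rfl)
  map_mul' _ _ := MulEquiv.toMonoidHom_injective (hom_ext (fun _ => rfl) fun _ => rfl)

theorem map_permAut_supported (σ : Equiv.Perm ι) (S : Set ι) :
    (supported S : Subgroup (FreeAdjoin B ι)).map (permAut σ).toMonoidHom =
      supported (σ '' S) := by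
  rw [supported, MonoidHom.map_closure, supported, Set.image_union, Set.image_image,
    Set.image_image, ← Set.range_comp]
  rfl

section Semidirect

/-- The action of `B` by left translation of the second factor of the basis `ι × B`; it is the
conjugation action of `B` on the kernel of `FreeAdjoin B ι → B`. -/
def translationAut (B ι : Type*) [Group B] : B →* MulAut (FreeGroup (ι × B)) :=
  (freeGroupPermAut (ι × B)).comp
    { toFun b := (Equiv.refl ι).prodCongr (Equiv.mulLeft b)
      map_one' := by ext <;> simp
      map_mul' a b := by ext <;> simp [mul_assoc] }

@[simp]
theorem translationAut_of (b c : B) (i : ι) :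
    translationAut B ι b (FreeGroup.of (i, c)) = FreeGroup.of (i, b * c) := rfl

/-- The decomposition of `FreeAdjoin B ι` as a semidirect product of `B` with the free kernel of the
retraction onto `B`, in which the basis element `(i, b)` stands for `b * i * b⁻¹`. -/
def toSemidirect : FreeAdjoin B ι →* FreeGroup (ι × B) ⋊[translationAut B ι] B :=
  lift SemidirectProduct.inr fun i => SemidirectProduct.inl (FreeGroup.of (i, 1))

theorem toSemidirect_injective : Injective (toSemidirect (B := B) (ι := ι)) := by
  let g : FreeGroup (ι × B) ⋊[translationAut B ι] B →* FreeAdjoin B ι :=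
    SemidirectProduct.lift (FreeGroup.lift fun x => const x.2 * var x.1 * (const x.2)⁻¹) const
      fun b => FreeGroup.ext_hom _ _ fun ⟨i, c⟩ => by simp [mul_assoc]
  have h : g.comp toSemidirect = .id _ :=
    hom_ext (fun b => by simp [g, toSemidirect]) fun i => by simp [g, toSemidirect]
  exact LeftInverse.injective (g := g) (DFunLike.congr_fun h)

end Semidirect

theorem locallyIndicable {B : Type} (ι : Type) [Group B] (hB : LocallyIndicable B) :
    LocallyIndicable (FreeAdjoin B ι) :=
  ((LocallyIndicable.freeGroup _).semidirectProduct hB).of_injective toSemidirect_injective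

/-! ### Words -/

/-- Words in the syllables `(b, i, e)`, where `(b, i, true)` stands for `b * i` and
`(b, i, false)` stands for `b * i⁻¹`. -/
abbrev Word (B : Type u) (ι : Type v) : Type max u v := List (B × ι × Bool)

/-- `t` or `t⁻¹`, according to the sign `e`. -/
def signed (t : D) (e : Bool) : D := cond e t t⁻¹

@[simp]
theorem signed_true (t : D) : signed t true = t := rfl

@[simp]
theorem signed_false (t : D) : signed t false = t⁻¹ := rfl

theorem map_signed {E : Type*} [Group E] (f : D →* E) (t : D) (e : Bool) :
    f (signed t e) = signed (f t) e := by
  cases e <;> simp only [signed_true, signed_false, map_inv]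

theorem signed_mem {S : Subgroup D} {t : D} (ht : t ∈ S) (e : Bool) : signed t e ∈ S := by
  cases e
  exacts [S.inv_mem ht, ht]

/-- The product of the syllables of a word, for coefficients read through `f` and variables read
through `x`. -/
def eval (f : B →* D) (x : ι → D) (l : Word B ι) : D :=
  (l.map fun a => f a.1 * signed (x a.2.1) a.2.2).prod

@[simp]
theorem eval_nil (f : B →* D) (x : ι → D) : eval f x [] = 1 := rfl

@[simp]
theorem eval_cons (f : B →* D) (x : ι → D) (a : B × ι × Bool) (l : Word B ι) :
    eval f x (a :: l) = f a.1 * signed (x a.2.1) a.2.2 * eval f x l := List.prod_cons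

@[simp]
theorem eval_append (f : B →* D) (x : ι → D) (l l' : Word B ι) :
    eval f x (l ++ l') = eval f x l * eval f x l' := by
  rw [eval, List.map_append, List.prod_append, eval, eval]

theorem map_eval {E : Type*} [Group E] (g : D →* E) (f : B →* D) (x : ι → D) (l : Word B ι) :
    g (eval f x l) = eval (g.comp f) (g ∘ x) l := by
  simp only [eval, map_list_prod, List.map_map, comp_def, map_mul, map_signed,
    MonoidHom.comp_apply]

theorem isConj_eval_of_isRotated (f : B →* D) (x : ι → D) {l l' : Word B ι} (h : l ~r l') :
    IsConj (eval f x l) (eval f x l') :=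
  isConj_prod_of_isRotated (h.map _)

/-- The element of `FreeAdjoin B ι` represented by a word. -/
def ofWord (l : Word B ι) : FreeAdjoin B ι := eval const var l

theorem map_ofWord (g : FreeAdjoin B ι →* D) (l : Word B ι) :
    g (ofWord l) = eval (g.comp const) (g ∘ var) l :=
  map_eval g const var l

theorem lift_ofWord (f : B →* D) (x : ι → D) (l : Word B ι) : lift f x (ofWord l) = eval f x l := by
  rw [map_ofWord, show (lift f x).comp const = f from MonoidHom.ext (lift_const f x),
    show lift f x ∘ var = x from funext (lift_var f x)]

theorem ofWord_mem_supported {S : Set ι} {l : Word B ι} (h : ∀ a ∈ l, a.2.1 ∈ S) :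
    ofWord l ∈ supported (B := B) S :=
  Subgroup.list_prod_mem _ <| List.forall_mem_map.2 fun a ha =>
    mul_mem (const_mem_supported S a.1) (signed_mem (var_mem_supported (h a ha)) a.2.2)

/-- The syllable `b` does not cancel against the preceding syllable `a`. -/
def Compat (a b : B × ι × Bool) : Prop := b.1 = 1 → a.2.1 = b.2.1 → a.2.2 = b.2.2

/-- No cancellation between neighbouring syllables, the last and the first one included. -/
def CyclicallyReduced (l : Word B ι) : Prop := (l : Cycle (B × ι × Bool)).Chain Compat

theorem CyclicallyReduced.of_isRotated {l l' : Word B ι} (h : CyclicallyReduced l)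
    (hl : l ~r l') : CyclicallyReduced l' := by
  rwa [CyclicallyReduced, ← Cycle.coe_eq_coe.2 hl]

section NormalForm

/-- The letters of the free normal subgroup that a word passes through; see `toSemidirect`. -/
def kernelWord : Word B ι → List ((ι × B) × Bool)
  | [] => []
  | (b, i, e) :: l => ((i, b), e) :: (kernelWord l).map (Prod.map (Prod.map id (b * ·)) id)

theorem left_toSemidirect_ofWord (l : Word B ι) :
    (toSemidirect (ofWord l)).left = FreeGroup.mk (kernelWord l) := by
  induction l with
  | nil => rfl
  | cons a l ih =>
    obtain ⟨b, i, e⟩ := a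
    have hsyllable : toSemidirect (ofWord ((b, i, e) :: l)) =
        SemidirectProduct.inr b * SemidirectProduct.inl (FreeGroup.mk [((i, 1), e)]) *
          toSemidirect (ofWord l) := by
      have hmk : FreeGroup.mk [((i, (1 : B)), e)] = signed (FreeGroup.of (i, 1)) e := by
        cases e <;> rfl
      rw [hmk, map_signed, ofWord, eval_cons, map_mul, map_mul, map_signed]
      simp only [toSemidirect, lift_const, lift_var, ofWord]
    have htranslate (L : List ((ι × B) × Bool)) : translationAut B ι b (FreeGroup.mk L) =
        FreeGroup.mk (L.map (Prod.map (Prod.map id (b * ·)) id)) := rfl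
    rw [hsyllable, SemidirectProduct.mul_left, SemidirectProduct.mul_left,
      SemidirectProduct.mul_right, ih]
    simp [htranslate, kernelWord, FreeGroup.mul_mk]

theorem kernelWord_isReduced {l : Word B ι} (h : l.IsChain Compat) :
    FreeGroup.IsReduced (kernelWord l) := by
  induction l with
  | nil => exact .nil
  | cons a l ih =>
    have hl := ih h.tail
    have hmap : FreeGroup.IsReduced
        ((kernelWord l).map (Prod.map (Prod.map id (a.1 * ·)) id)) := by
      rw [FreeGroup.IsReduced, List.isChain_map]
      refine hl.imp fun x y hxy heq => hxy ?_
      simpa [Prod.ext_iff] using heq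
    cases l with
    | nil => exact List.isChain_singleton _
    | cons c l =>
      refine List.isChain_cons_cons.2 ⟨fun heq => ?_, hmap⟩
      obtain ⟨hi, hb⟩ := Prod.ext_iff.1 heq
      exact (List.isChain_cons_cons.1 h).1 (left_eq_mul.1 hb) hi

theorem ofWord_mul_const_ne_one {l : Word B ι} (h : l.IsChain Compat) (hl : l ≠ []) (b : B) :
    ofWord l * const b ≠ 1 := by
  classical
  intro h1
  have h2 : FreeGroup.mk (kernelWord l) = 1 := by
    rw [← left_toSemidirect_ofWord, eq_inv_of_mul_eq_one_left h1, ← map_inv]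
    simp [toSemidirect]
  rw [← FreeGroup.toWord_eq_nil_iff, FreeGroup.toWord_mk, (kernelWord_isReduced h).reduce_eq] at h2
  cases l with
  | nil => exact hl rfl
  | cons a l => exact List.cons_ne_nil _ _ h2

end NormalForm

theorem cyclicallyReduced_append_singleton {l : Word B ι} {a : B × ι × Bool} :
    CyclicallyReduced (l ++ [a]) ↔ (a :: (l ++ [a])).IsChain Compat := by
  rw [CyclicallyReduced, ← Cycle.coe_cons_eq_coe_append, Cycle.chain_coe_cons]

section Collapse

variable [DecidableEq ι] {j : ι}

/-- The word in the single letter `j` obtained from `w ++ l` by absorbing all other letters into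
the coefficients; `w` collects the syllables since the last occurrence of `j`. -/
def collapse (j : ι) : Word B ι → Word B ι → Word (FreeAdjoin B ι) Unit
  | _, [] => []
  | w, a :: l =>
    if a.2.1 = j then (ofWord w * const a.1, (), a.2.2) :: collapse j [] l
    else collapse j (w ++ [a]) l

theorem collapse_append_singleton {a : B × ι × Bool} (ha : a.2.1 = j) (l w : Word B ι) :
    ∃ m c, collapse j w (l ++ [a]) = m ++ [(c, (), a.2.2)] := by
  induction l generalizing w with
  | nil => exact ⟨[], _, if_pos ha⟩
  | cons b l ih =>
    rw [List.cons_append, collapse]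
    split_ifs
    · obtain ⟨m, c, h⟩ := ih []
      exact ⟨_ :: m, c, congrArg _ h⟩
    · exact ih _

theorem length_collapse (l w : Word B ι) :
    (collapse j w l).length = l.countP (·.2.1 = j) := by
  induction l generalizing w with
  | nil => rfl
  | cons a l ih => by_cases h : a.2.1 = j <;> simp [collapse, h, ih]

theorem eval_collapse (g : FreeAdjoin B ι →* D) (t : D) {a : B × ι × Bool} (ha : a.2.1 = j)
    (l w : Word B ι) :
    eval g (fun _ => t) (collapse j w (l ++ [a])) =
      g (ofWord w) * eval (g.comp const) (update (g ∘ var) j t) (l ++ [a]) := by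
  induction l generalizing w with
  | nil => simp [collapse, ha, mul_assoc]
  | cons b l ih =>
    rw [List.cons_append, collapse]
    split_ifs with hb
    · rw [eval_cons, ih]
      simp [hb, ofWord, mul_assoc]
    · rw [ih]
      simp [hb, ofWord, map_signed, mul_assoc]

theorem isChain_collapse {l w : Word B ι} {x : B × ι × Bool} (hx : x.2.1 = j)
    (h : (x :: (w ++ l)).IsChain Compat) (c : FreeAdjoin B ι) :
    ((c, (), x.2.2) :: collapse j w l).IsChain Compat := by
  induction l generalizing w x c with
  | nil => exact .singleton _
  | cons a l ih =>
    rw [collapse]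
    split_ifs with ha
    · refine List.isChain_cons_cons.2 ⟨fun h1 _ => ?_, ih (w := []) ha ?_ _⟩
      · obtain rfl : w = [] := by
          by_contra hw
          exact ofWord_mul_const_ne_one h.tail.left_of_append hw a.1 h1
        refine (List.isChain_cons_cons.1 h).1 (const_injective (ι := ι) ?_) (hx.trans ha.symm)
        rw [map_one, ← h1, ofWord, eval_nil, one_mul]
      · exact List.IsChain.right_of_append (l₁ := x :: w) h
    · exact ih hx (by simpa using h) c

theorem CyclicallyReduced.collapse {l : Word B ι} {a : B × ι × Bool} (ha : a.2.1 = j)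
    (h : CyclicallyReduced (l ++ [a])) : CyclicallyReduced (collapse j [] (l ++ [a])) := by
  have hchain :=
    isChain_collapse (l := l ++ [a]) (w := []) ha (cyclicallyReduced_append_singleton.1 h)
  obtain ⟨m, c, hm⟩ := collapse_append_singleton ha l []
  rw [hm] at hchain ⊢
  exact cyclicallyReduced_append_singleton.2 (hchain c)

end Collapse

/-- The equation `l = 1` in one unknown has a solution in some group containing `B`. -/
def HasSolution {B : Type} [Group B] (l : Word B Unit) : Prop :=
  ∃ (E : Type) (_ : Group E) (f : B →* E) (t : E), Injective f ∧ eval f (fun _ => t) l = 1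

/-- Cyclically reduced equations with `n` syllables are solvable over locally indicable groups. -/
def EquationsSolvable (n : ℕ) : Prop :=
  ∀ (B : Type) [Group B], LocallyIndicable B →
    ∀ l : Word B Unit, l.length = n → CyclicallyReduced l → HasSolution l

theorem disjoint_normalClosure_ofWord_supported {B ι : Type} [Group B] [DecidableEq ι]
    (hB : LocallyIndicable B) {l : Word B ι} (hl : CyclicallyReduced l) {a : B × ι × Bool}
    (ha : a ∈ l) (h : EquationsSolvable (l.countP (·.2.1 = a.2.1))) :
    Disjoint (Subgroup.normalClosure {ofWord l}) (supported {a.2.1}ᶜ) := by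
  obtain ⟨l₁, l₂, rfl⟩ := List.append_of_mem ha
  have hrot : l₁ ++ a :: l₂ ~r (l₂ ++ l₁) ++ [a] := by
    simpa using List.isRotated_append (l := l₁ ++ [a]) (l' := l₂)
  rw [hrot.perm.countP_eq] at h
  obtain ⟨E, _, f, t, hf, ht⟩ := h _ (locallyIndicable ι hB) _ (length_collapse _ [])
    ((hl.of_isRotated hrot).collapse rfl)
  rw [eval_collapse _ _ rfl, ofWord, eval_nil, map_one, one_mul] at ht
  refine disjoint_normalClosure_of_eqOn (g := lift (f.comp const) (update (f ∘ var) a.2.1 t)) hf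
    ?_ (eqOn_supported (fun b => by simp) fun i hi => by simp [update_of_ne hi])
  rintro _ rfl
  rw [lift_ofWord, ← isConj_one_right, ← ht]
  exact (isConj_eval_of_isRotated _ _ hrot).symm

/-! ### Staggered relators -/

/-- A relation between elements supported on `J` that holds modulo `R ∪ S` holds modulo `S`
alone, since the quotient by `R ∪ S` maps to an amalgam of the quotients by `R` and by `S`. -/
theorem normalClosure_union_inf_supported_le {I J : Set ι} {R S : Set (FreeAdjoin B ι)}
    (hR : R ⊆ supported (B := B) I) (hS : S ⊆ supported (B := B) J)
    (hRd : Disjoint (Subgroup.normalClosure R) (supported (I ∩ J)))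
    (hSd : Disjoint (Subgroup.normalClosure S) (supported (I ∩ J))) :
    Subgroup.normalClosure (R ∪ S) ⊓ supported J ≤ Subgroup.normalClosure S := by
  classical
  obtain ⟨E, _, f, g, -, hg, hfg⟩ := exists_amalgam
    (f₁ := (QuotientGroup.mk' (Subgroup.normalClosure R)).comp (supported (I ∩ J)).subtype)
    (f₂ := (QuotientGroup.mk' (Subgroup.normalClosure S)).comp (supported (I ∩ J)).subtype)
    (Set.injOn_iff_injective.1 (injOn_mk'_of_disjoint hRd))
    (Set.injOn_iff_injective.1 (injOn_mk'_of_disjoint hSd))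
  let f' := f.comp (QuotientGroup.mk' (Subgroup.normalClosure R))
  let g' := g.comp (QuotientGroup.mk' (Subgroup.normalClosure S))
  let F : FreeAdjoin B ι →* E :=
    lift (g'.comp const) fun i => if i ∈ I then f' (var i) else g' (var i)
  have hFI : Set.EqOn F f' (supported I : Subgroup (FreeAdjoin B ι)) := by
    refine eqOn_supported (fun b => ?_) fun i hi => ?_
    · exact (lift_const _ _ _).trans (hfg ⟨const b, const_mem_supported _ b⟩).symm
    · simp [F, hi]
  have hFJ : Set.EqOn F g' (supported J : Subgroup (FreeAdjoin B ι)) := by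
    refine eqOn_supported (fun b => lift_const _ _ _) fun i hJ => ?_
    by_cases hI : i ∈ I
    · exact (lift_var _ _ _).trans ((if_pos hI).trans (hfg ⟨var i, var_mem_supported ⟨hI, hJ⟩⟩))
    · simp [F, hI]
  have hker : Subgroup.normalClosure (R ∪ S) ≤ F.ker := by
    refine Subgroup.normalClosure_le_normal ?_
    rintro r (hr | hr)
    · have hr1 : (r : FreeAdjoin B ι ⧸ Subgroup.normalClosure R) = 1 :=
        (QuotientGroup.eq_one_iff r).2 (Subgroup.subset_normalClosure hr)
      exact (hFI (hR hr)).trans ((congrArg f hr1).trans (map_one f))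
    · have hr1 : (r : FreeAdjoin B ι ⧸ Subgroup.normalClosure S) = 1 :=
        (QuotientGroup.eq_one_iff r).2 (Subgroup.subset_normalClosure hr)
      exact (hFJ (hS hr)).trans ((congrArg g hr1).trans (map_one g))
  rintro x ⟨hx, hxJ⟩
  refine (QuotientGroup.eq_one_iff x).1 (hg ?_)
  exact (hFJ hxJ).symm.trans ((hker hx).trans (map_one g).symm)

section Staggered

variable {R : ℤ → FreeAdjoin B ℤ} {lo hi : ℤ}

theorem disjoint_normalClosure_window
    (hR : ∀ j, R j ∈ supported (B := B) (Set.Icc (lo + j) (hi + j)))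
    (hlo : ∀ j, Disjoint (Subgroup.normalClosure {R j}) (supported {lo + j}ᶜ))
    (hhi : ∀ j, Disjoint (Subgroup.normalClosure {R j}) (supported {hi + j}ᶜ)) {a m : ℤ}
    (ham : a ≤ m) :
    Disjoint (Subgroup.normalClosure (R '' Set.Ico a m)) (supported (Set.Ici (lo + m))) := by
  induction m, ham using Int.leInduction with
  | base => simp
  | succ m ham ih =>
    have hIco : Set.Ico a (m + 1) = Set.Ico a m ∪ {m} := by
      ext
      simp only [Set.mem_Ico, Set.mem_union, Set.mem_singleton_iff]
      omega
    have hR' : R '' Set.Ico a m ⊆ supported (B := B) (Set.Iio (hi + m)) := by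
      rintro _ ⟨j, hj, rfl⟩
      exact supported_mono (fun i hij => hij.2.trans_lt (by linarith [hj.2])) (hR j)
    have hle := normalClosure_union_inf_supported_le hR'
      (Set.singleton_subset_iff.2 (supported_mono Set.Icc_subset_Ici_self (hR m)))
      (ih.mono_right (supported_mono Set.inter_subset_right))
      ((hhi m).mono_right (supported_mono fun i hi => ne_of_lt hi.1))
    rw [hIco, Set.image_union, Set.image_singleton]
    refine Subgroup.disjoint_def.2 fun {x} hx hx' => Subgroup.disjoint_def.1 (hlo m)
      (hle ⟨hx, supported_mono (Set.Ici_subset_Ici.2 (by omega)) hx'⟩)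
      (supported_mono (fun i hi => ne_of_gt (by linarith [Set.mem_Ici.1 hi])) hx')

theorem disjoint_normalClosure_range_of_staggered
    (hR : ∀ j, R j ∈ supported (B := B) (Set.Icc (lo + j) (hi + j)))
    (hlo : ∀ j, Disjoint (Subgroup.normalClosure {R j}) (supported {lo + j}ᶜ))
    (hhi : ∀ j, Disjoint (Subgroup.normalClosure {R j}) (supported {hi + j}ᶜ)) :
    Disjoint (Subgroup.normalClosure (Set.range R)) (supported ∅) := by
  let N (n : ℕ) : Subgroup (FreeAdjoin B ℤ) := Subgroup.normalClosure (R '' Set.Ico (-n : ℤ) n)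
  have hN : Monotone N := fun m n hmn => Subgroup.normalClosure_mono <|
    Set.image_mono (Set.Ico_subset_Ico (by omega) (by omega))
  have hle : Subgroup.normalClosure (Set.range R) ≤ ⨆ n, N n := by
    refine Subgroup.normalClosure_le_normal ?_
    rintro _ ⟨j, rfl⟩
    exact Subgroup.mem_iSup_of_mem (j.natAbs + 1)
      (Subgroup.subset_normalClosure ⟨j, ⟨by omega, by omega⟩, rfl⟩)
  refine Disjoint.mono_left hle (Subgroup.disjoint_def.2 fun {x} hx hx' => ?_)
  obtain ⟨n, hn⟩ := (Subgroup.mem_iSup_of_directed hN.directed_le).1 hx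
  exact Subgroup.disjoint_def.1 (disjoint_normalClosure_window hR hlo hhi (by omega)) hn
    (supported_mono (Set.empty_subset _) hx')

end Staggered

section Shift

/-- The action of `ℤ` by translation of the indices of the variables. -/
def shift : Multiplicative ℤ →* MulAut (FreeAdjoin B ℤ) :=
  permAut.comp (MulAction.toPermHom (Multiplicative ℤ) ℤ)

@[simp]
theorem shift_const (z : Multiplicative ℤ) (b : B) : shift z (const b) = const b := rfl

@[simp]
theorem shift_var (z : Multiplicative ℤ) (k : ℤ) :
    shift z (var k : FreeAdjoin B ℤ) = var (z.toAdd + k) := rfl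

theorem map_shift_supported (z : Multiplicative ℤ) (S : Set ℤ) :
    (supported S : Subgroup (FreeAdjoin B ℤ)).map (shift z).toMonoidHom =
      supported ((z.toAdd + ·) '' S) :=
  map_permAut_supported _ S

theorem disjoint_normalClosure_shift {x : FreeAdjoin B ℤ} {k : ℤ}
    (h : Disjoint (Subgroup.normalClosure {x}) (supported {k}ᶜ)) (j : ℤ) :
    Disjoint (Subgroup.normalClosure {shift (.ofAdd j) x}) (supported {k + j}ᶜ) := by
  have hmap := Subgroup.disjoint_map (f := (shift (.ofAdd j)).toMonoidHom)
    (MulEquiv.injective _) h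
  rwa [Subgroup.map_normalClosure _ _ (MulEquiv.surjective _), Set.image_singleton,
    map_shift_supported, Set.image_compl_eq (AddGroup.addLeft_bijective _), Set.image_singleton,
    toAdd_ofAdd, add_comm] at hmap

theorem disjoint_normalClosure_shifts {B : Type} [Group B] (hB : LocallyIndicable B)
    {L : Word B ℤ} (hL : CyclicallyReduced L) (hsolv : ∀ k < L.length, EquationsSolvable k)
    (hne : ∃ a ∈ L, ∃ b ∈ L, a.2.1 ≠ b.2.1) :
    Disjoint (Subgroup.normalClosure (Set.range fun k : ℤ => shift (.ofAdd k) (ofWord L)))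
      (supported ∅) := by
  obtain ⟨a, ha, b, hb, hab⟩ := hne
  have hletter {c : B × ℤ × Bool} (hc : c ∈ L) :
      Disjoint (Subgroup.normalClosure {ofWord L}) (supported {c.2.1}ᶜ) := by
    refine disjoint_normalClosure_ofWord_supported hB hL hc (hsolv _ ?_)
    refine lt_of_le_of_ne List.countP_le_length fun h => hab ?_
    rw [List.countP_eq_length] at h
    exact (of_decide_eq_true (h a ha)).trans (of_decide_eq_true (h b hb)).symm
  obtain ⟨x, hx, hmin⟩ := Set.exists_min_image {c | c ∈ L} (·.2.1) L.finite_toSet ⟨a, ha⟩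
  obtain ⟨y, hy, hmax⟩ := Set.exists_max_image {c | c ∈ L} (·.2.1) L.finite_toSet ⟨a, ha⟩
  refine disjoint_normalClosure_range_of_staggered (fun j => ?_)
    (disjoint_normalClosure_shift (hletter hx)) (disjoint_normalClosure_shift (hletter hy))
  have hmem : ofWord L ∈ supported (B := B) (Set.Icc x.2.1 y.2.1) :=
    ofWord_mem_supported fun c hc => ⟨hmin c hc, hmax c hc⟩
  have hshift := Subgroup.mem_map_of_mem (shift (.ofAdd j)).toMonoidHom hmem
  rwa [map_shift_supported, Set.image_const_add_Icc, toAdd_ofAdd, add_comm j, add_comm j] at hshift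

theorem exists_shift_extension {B : Type u} [Group B] {r : FreeAdjoin B ℤ}
    (hr : Disjoint (Subgroup.normalClosure (Set.range fun z => shift z r)) (supported ∅)) :
    ∃ (E : Type u) (_ : Group E) (F : B × Multiplicative ℤ →* E) (τ : E), Injective F ∧
      lift (F.comp (.inl _ _)) (fun k => F (1, .ofAdd k) * τ * (F (1, .ofAdd k))⁻¹) r = 1 := by
  let i : FreeAdjoin B ℤ →* FreeAdjoin B ℤ ⋊[shift] Multiplicative ℤ := SemidirectProduct.inl
  let π := QuotientGroup.mk' (Subgroup.normalClosure {i r})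
  let F₀ : B × Multiplicative ℤ →* FreeAdjoin B ℤ ⋊[shift] Multiplicative ℤ :=
    (i.comp const).noncommCoprod SemidirectProduct.inr fun b z => by
      refine Commute.symm (mul_inv_eq_iff_eq_mul.1 ?_)
      rw [MonoidHom.comp_apply, ← map_inv, ← SemidirectProduct.inl_aut, shift_const]
  refine ⟨_, inferInstance, π.comp F₀, π (i (var 0)), ?_, ?_⟩
  · refine (injective_iff_map_eq_one _).2 fun ⟨b, z⟩ h => ?_
    obtain ⟨x, hx, hxF⟩ := normalClosure_inl_le r ((QuotientGroup.eq_one_iff _).1 h)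
    obtain rfl : z = 1 := by simpa [F₀, i] using (congrArg SemidirectProduct.right hxF).symm
    obtain rfl : x = const b := by simpa [F₀, i] using congrArg SemidirectProduct.left hxF
    have hb := Subgroup.disjoint_def.1 hr hx (const_mem_supported ∅ b)
    rw [const_injective (hb.trans (map_one const).symm), Prod.one_eq_mk]
  · suffices h : lift ((π.comp F₀).comp (.inl _ _)) (fun k => (π.comp F₀) (1, .ofAdd k) *
        π (i (var 0)) * ((π.comp F₀) (1, .ofAdd k))⁻¹) = π.comp i by
      rw [h]
      exact (QuotientGroup.eq_one_iff _).2 (Subgroup.subset_normalClosure rfl)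
    refine hom_ext (fun b => by simp [F₀]) fun k => ?_
    have hvar : i (var k) = SemidirectProduct.inr (.ofAdd k) * i (var 0) *
        SemidirectProduct.inr (.ofAdd k)⁻¹ := by
      rw [← SemidirectProduct.inl_aut, shift_var, toAdd_ofAdd, add_zero]
    simp [F₀, hvar]

end Shift

/-! ### Equations in one unknown -/

section Levels

variable {C : Type*} {u w : C × Unit × Bool → ℤ}

/-- The word in the conjugates of one variable by the powers of a stable letter `z` obtained by
collecting the powers of `z` when each syllable `a` contributes `z ^ u a` after its coefficient and
`z ^ w a` at its end; `k` is the exponent of `z` reached so far. -/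
def levels (u w : C × Unit × Bool → ℤ) : ℤ → Word C Unit → Word C ℤ
  | _, [] => []
  | k, a :: l => (a.1, k + u a, a.2.2) :: levels u w (k + u a + w a) l

theorem map_levels (k : ℤ) (l : Word C Unit) :
    (levels u w k l).map (fun x => (x.1, (), x.2.2)) = l := by
  induction l generalizing k with
  | nil => rfl
  | cons a l ih => exact congrArg _ (ih _)

theorem length_levels (k : ℤ) (l : Word C Unit) : (levels u w k l).length = l.length := by
  rw [← List.length_map, map_levels]

theorem CyclicallyReduced.levels [Group C] {l : Word C Unit} (h : CyclicallyReduced l) (k : ℤ) :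
    CyclicallyReduced (levels u w k l) := by
  rw [← map_levels (u := u) (w := w) k l, CyclicallyReduced, ← Cycle.map_coe,
    Cycle.chain_map] at h
  exact h.imp fun _ _ hab h1 _ => hab h1 rfl

theorem isChain_of_levels_eq {l : Word C Unit} {c k : ℤ} {x y : C × Unit × Bool}
    (hx : k = c + w x) (hl : ∀ a ∈ levels u w k l, a.2.1 = c)
    (hy : k + (l.map fun a => u a + w a).sum + u y = c) :
    (x :: (l ++ [y])).IsChain fun a b => w a + u b = 0 := by
  induction l generalizing k x with
  | nil =>
    simp only [List.map_nil, List.sum_nil] at hy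
    exact List.isChain_pair.2 (by omega)
  | cons a l ih =>
    rw [levels, List.forall_mem_cons] at hl
    obtain ⟨ha : k + u a = c, hl⟩ := hl
    rw [List.map_cons, List.sum_cons] at hy
    exact List.isChain_cons_cons.2 ⟨by omega, ih (by omega) hl (by omega)⟩

theorem exists_ne_of_mem_levels {l : Word C Unit} (hsum : (l.map fun a => u a + w a).sum = 0)
    (hl : ¬ (l : Cycle (C × Unit × Bool)).Chain fun a b => w a + u b = 0) :
    ∃ a ∈ levels u w 0 l, ∃ b ∈ levels u w 0 l, a.2.1 ≠ b.2.1 := by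
  by_contra! h
  cases l with
  | nil => exact hl (Cycle.Chain.nil _)
  | cons a l =>
    rw [levels, List.forall_mem_cons] at h
    rw [List.map_cons, List.sum_cons] at hsum
    refine hl (Cycle.chain_coe_cons _ _ _ |>.2 (isChain_of_levels_eq (c := 0 + u a) rfl
      (fun b hb => (h.1 b (List.mem_cons_of_mem _ hb)).symm) (by omega)))

/-- The value of a word whose syllable `a` is interspersed with the powers `u a` and `w a` of the
stable letter `F (1, .ofAdd 1)`. -/
def twistedEval (F : B × Multiplicative ℤ →* D) (τ : D) (u w : B × Unit × Bool → ℤ)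
    (l : Word B Unit) : D :=
  (l.map fun a => F (a.1, .ofAdd (u a)) * signed τ a.2.2 * F (1, .ofAdd (w a))).prod

theorem mul_twistedEval {u w : B × Unit × Bool → ℤ} (F : B × Multiplicative ℤ →* D) (τ : D)
    (k : ℤ) (l : Word B Unit) :
    F (1, .ofAdd k) * twistedEval F τ u w l =
      eval (F.comp (.inl _ _)) (fun k => F (1, .ofAdd k) * τ * (F (1, .ofAdd k))⁻¹)
        (levels u w k l) * F (1, .ofAdd (k + (l.map fun a => u a + w a).sum)) := by
  induction l generalizing k with
  | nil => simp [twistedEval, levels]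
  | cons a l ih =>
    have hu : F (1, .ofAdd k) * F (a.1, .ofAdd (u a)) = F (a.1, 1) * F (1, .ofAdd (k + u a)) := by
      simp only [← map_mul, Prod.mk_mul_mk, one_mul, mul_one, ofAdd_add]
    have hw : F (1, .ofAdd (k + u a)) * F (1, .ofAdd (w a)) = F (1, .ofAdd (k + u a + w a)) := by
      simp only [← map_mul, Prod.mk_mul_mk, mul_one, ofAdd_add]
    have hconj (x : D) : signed (x * τ * x⁻¹) a.2.2 = x * signed τ a.2.2 * x⁻¹ :=
      (map_signed (MulAut.conj x).toMonoidHom τ a.2.2).symm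
    calc F (1, .ofAdd k) * twistedEval F τ u w (a :: l)
      _ = F (1, .ofAdd k) * F (a.1, .ofAdd (u a)) * signed τ a.2.2 *
            (F (1, .ofAdd (w a)) * twistedEval F τ u w l) := by
          simp only [twistedEval, List.map_cons, List.prod_cons, mul_assoc]
      _ = F (a.1, 1) * signed (F (1, .ofAdd (k + u a)) * τ * (F (1, .ofAdd (k + u a)))⁻¹) a.2.2 *
            (F (1, .ofAdd (k + u a + w a)) * twistedEval F τ u w l) := by
          rw [hconj, ← hw, hu]
          group
      _ = _ := by
          rw [ih]
          simp [levels, mul_assoc, add_assoc]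

theorem exists_twisted_solution {B : Type} [Group B] (hB : LocallyIndicable B)
    {u w : B × Unit × Bool → ℤ} {l : Word B Unit} (hl : CyclicallyReduced l)
    (hsolv : ∀ k < l.length, EquationsSolvable k) (hsum : (l.map fun a => u a + w a).sum = 0)
    (hne : ¬ (l : Cycle (B × Unit × Bool)).Chain fun a b => w a + u b = 0) :
    ∃ (E : Type) (_ : Group E) (F : B × Multiplicative ℤ →* E) (τ : E), Injective F ∧
      twistedEval F τ u w l = 1 := by
  obtain ⟨E, _, F, τ, hF, hτ⟩ := exists_shift_extension <| disjoint_normalClosure_shifts hB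
    (hl.levels 0) (by rwa [length_levels]) (exists_ne_of_mem_levels hsum hne)
  refine ⟨E, _, F, τ, hF, ?_⟩
  have h := mul_twistedEval (u := u) (w := w) F τ 0 l
  rwa [← lift_ofWord, hτ, hsum, add_zero, one_mul, ofAdd_zero, ← Prod.one_eq_mk, map_one,
    one_mul] at h

end Levels

section SameSign

/-- The word obtained from `l` by replacing the unknown `t` with `t * a⁻¹`, where each trailing
`a` is moved into the next coefficient; `d` is the sign of the syllable preceding `l`. -/
def substMul (a : B) : Bool → Word B Unit → Word B Unit
  | _, [] => []
  | d, x :: l => (cond d a 1 * x.1 * cond x.2.2 1 a⁻¹, (), x.2.2) :: substMul a x.2.2 l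

theorem length_substMul (a : B) (d : Bool) (l : Word B Unit) :
    (substMul a d l).length = l.length := by
  induction l generalizing d with
  | nil => rfl
  | cons x l ih => exact congrArg (· + 1) (ih _)

theorem substMul_append_singleton (a : B) (d : Bool) (l : Word B Unit) (p : B × Unit × Bool) :
    ∃ m c, substMul a d (l ++ [p]) = m ++ [(c, (), p.2.2)] := by
  induction l generalizing d with
  | nil => exact ⟨[], _, rfl⟩
  | cons x l ih =>
    obtain ⟨m, c, h⟩ := ih x.2.2
    exact ⟨_ :: m, c, congrArg _ h⟩

theorem eval_substMul (f : B →* D) (t : D) (a : B) (d : Bool) (l : Word B Unit)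
    (p : B × Unit × Bool) :
    eval f (fun _ => t) (substMul a d (l ++ [p])) * f (cond p.2.2 a 1) =
      f (cond d a 1) * eval f (fun _ => t * f a) (l ++ [p]) := by
  induction l generalizing d with
  | nil =>
    obtain ⟨b, -, e⟩ := p
    cases e <;> simp [substMul, mul_assoc]
  | cons x l ih =>
    obtain ⟨b, -, e⟩ := x
    rw [List.cons_append, substMul, eval_cons, mul_assoc, ih, eval_cons]
    cases e <;> simp [mul_assoc]

theorem isChain_substMul {l : Word B Unit} {x y : B × Unit × Bool} (hxy : y.2.2 = x.2.2) (a : B)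
    (h : (x :: l).IsChain Compat) : (y :: substMul a x.2.2 l).IsChain Compat := by
  have hcoeff {d e : Bool} (hde : d ≠ e) (b : B) (h1 : cond d a 1 * b * cond e 1 a⁻¹ = 1) :
      b = 1 := by
    cases d <;> cases e <;> simp_all
  induction l generalizing x y with
  | nil => exact .singleton _
  | cons z l ih =>
    obtain ⟨hxz, hl⟩ := List.isChain_cons_cons.1 h
    refine List.isChain_cons_cons.2 ⟨fun h1 _ => ?_, ih rfl hl⟩
    by_contra hne
    rw [hxy] at hne
    exact hne (hxz (hcoeff hne _ h1) rfl)

theorem CyclicallyReduced.substMul {l : Word B Unit} {p : B × Unit × Bool} (a : B)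
    (h : CyclicallyReduced (l ++ [p])) : CyclicallyReduced (substMul a p.2.2 (l ++ [p])) := by
  obtain ⟨m, c, hm⟩ := substMul_append_singleton a p.2.2 l p
  have hchain := isChain_substMul (x := p) (y := (c, (), p.2.2)) rfl a
    (cyclicallyReduced_append_singleton.1 h)
  rw [hm] at hchain ⊢
  exact cyclicallyReduced_append_singleton.2 hchain

end SameSign

theorem exists_twist {K : Subgroup B} {ψ : K →* Multiplicative ℤ} {φ : B → ℤ}
    (h : ∀ x, ψ x = .ofAdd (φ x)) (c : ℤ) :
    ∃ j : K →* B × Multiplicative ℤ, Injective j ∧ ∀ x, j x = (x.1, .ofAdd (c * φ x)) := by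
  refine ⟨K.subtype.prod ((zpowGroupHom c).comp ψ), fun x y hxy => ?_, fun x => ?_⟩
  · exact Subtype.ext (congrArg Prod.fst hxy)
  · refine Prod.ext rfl ?_
    change ψ x ^ c = _
    rw [h, ← ofAdd_zsmul, smul_eq_mul]

theorem HasSolution.of_forall_eq_one {B : Type} [Group B] {l : Word B Unit}
    (h : ∀ a ∈ l, a.1 = 1) : HasSolution l := by
  refine ⟨B, inferInstance, .id B, 1, injective_id, List.prod_eq_one ?_⟩
  simp only [List.forall_mem_map]
  intro a ha
  cases he : a.2.2 <;> simp [h a ha]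

theorem hasSolution_of_twistedEval_eq_one {B E : Type} [Group B] [Group E] {s : Set B}
    {ψ : Subgroup.closure s →* Multiplicative ℤ} {φ : B → ℤ} (hψ : ∀ x, ψ x = .ofAdd (φ x))
    {F : B × Multiplicative ℤ →* E} (hF : Injective F) {τ : E} {c m : ℤ} {l : Word B Unit}
    (hs : ∀ a ∈ l, a.1 ∈ s)
    (h : twistedEval F τ (fun a => c * φ a.1 + cond a.2.2 0 (-m)) (fun a => cond a.2.2 m 0) l = 1) :
    HasSolution l := by
  obtain ⟨j, hj, hj'⟩ := exists_twist hψ c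
  obtain ⟨E', _, g₁, g₂, hg₁, -, hg⟩ := exists_amalgam (f₂ := F.comp j)
    (Subgroup.subtype_injective _) (hF.comp hj)
  refine ⟨E', _, g₁, g₂ (τ * F (1, .ofAdd m)), hg₁, ?_⟩
  rw [← map_one g₂, ← h, eval, twistedEval, map_list_prod, List.map_map]
  congr 1
  refine List.map_congr_left fun a ha => ?_
  have hcoeff : g₁ a.1 = g₂ (F (a.1, .ofAdd (c * φ a.1))) := by
    have := hg ⟨a.1, Subgroup.subset_closure (hs a ha)⟩
    rwa [MonoidHom.comp_apply, hj'] at this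
  rw [hcoeff, ← map_signed, ← map_mul, comp_apply]
  congr 1
  cases a.2.2
  · have hinv : F (a.1, .ofAdd (c * φ a.1)) * (F (1, .ofAdd m))⁻¹ =
        F (a.1, .ofAdd (c * φ a.1 + -m)) := by
      rw [← map_inv, ← map_mul, Prod.inv_mk, Prod.mk_mul_mk, inv_one, mul_one, ofAdd_add,
        ofAdd_neg]
    simp only [signed_false, cond_false, ofAdd_zero, ← Prod.one_eq_mk, map_one, mul_one,
      mul_inv_rev, ← hinv, mul_assoc]
  · simp [mul_assoc]

theorem hasSolution_of_coefficient_eq_one {B : Type} [Group B] (hB : LocallyIndicable B)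
    {l l₁ l₂ : Word B Unit} {p q : B × Unit × Bool} (hp : l = l₁ ++ [p]) (hq : l = q :: l₂)
    (hl : CyclicallyReduced l) (hsolv : ∀ k < l.length, EquationsSolvable k)
    (hsign : p.2.2 = q.2.2) (hq1 : q.1 = 1) : HasSolution l := by
  by_cases hone : ∀ a ∈ l, a.1 = 1
  · exact .of_forall_eq_one hone
  push Not at hone
  obtain ⟨a, ha, ha1⟩ := hone
  obtain ⟨ψ, φ, hψ, b, hb, hφ⟩ := hB.exists_character (s := {b | b ∈ l.map Prod.fst})
    (List.finite_toSet _) (List.mem_map_of_mem ha) ha1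
  obtain ⟨x, hx, rfl⟩ := List.mem_map.1 hb
  obtain ⟨c, m, hcm, hsum⟩ := exists_int_relation (l.map fun a => φ a.1).sum
    (l.map fun a => cond a.2.2 1 (-1)).sum
  let u (a : B × Unit × Bool) : ℤ := c * φ a.1 + cond a.2.2 0 (-m)
  let w (a : B × Unit × Bool) : ℤ := cond a.2.2 m 0
  have hsum' : (l.map fun a => u a + w a).sum = 0 := by
    rw [← hsum, ← List.sum_map_mul_left, ← List.sum_map_mul_left, ← List.sum_map_add]
    congr 2 with a
    cases he : a.2.2 <;> simp [u, w, he]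
  have hne : ¬ (l : Cycle (B × Unit × Bool)).Chain fun a b => w a + u b = 0 := fun hchain => by
    have hφ1 : φ 1 = 0 := Multiplicative.ofAdd.injective ((hψ 1).symm.trans (map_one ψ))
    have hpq := rel_of_chain_of_append_eq (hp.symm.trans hq) (hp ▸ hchain)
    obtain rfl : m = 0 := by
      cases he : q.2.2 <;> simpa [u, w, hsign, he, hq1, hφ1] using hpq
    have hux := forall_mem_of_chain (P := fun b => u b = 0)
      (hchain.imp fun a b hab => by simpa [w] using hab) x hx
    exact hcm.elim (fun hc => mul_ne_zero hc hφ (by simpa [u] using hux)) fun h => h rfl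
  obtain ⟨E, _, F, τ, hF, hτ⟩ := exists_twisted_solution hB hl hsolv hsum' hne
  exact hasSolution_of_twistedEval_eq_one hψ hF (fun a ha => List.mem_map_of_mem ha) hτ

theorem hasSolution_of_sign_eq {B : Type} [Group B] (hB : LocallyIndicable B)
    {l₁ l₂ : Word B Unit} {p q : B × Unit × Bool} (hpq : l₁ ++ [p] = q :: l₂)
    (hl : CyclicallyReduced (q :: l₂)) (hsolv : ∀ k < (q :: l₂).length, EquationsSolvable k)
    (hsign : p.2.2 = q.2.2) : HasSolution (q :: l₂) := by
  rw [← hpq] at hl hsolv ⊢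
  let a := signed q.1 (!q.2.2)
  obtain ⟨m, c, hm⟩ := substMul_append_singleton a p.2.2 l₁ p
  obtain ⟨E, _, f, t, hf, ht⟩ := hasSolution_of_coefficient_eq_one hB hm
    ((congrArg _ hpq).trans rfl) (hl.substMul a) (by rwa [length_substMul]) hsign (by
      rw [hsign]
      cases he : q.2.2 <;> simp [a, he])
  refine ⟨E, _, f, t * f a, hf, ?_⟩
  have h := eval_substMul f t a p.2.2 l₁ p
  rwa [ht, one_mul, left_eq_mul] at h

section Alternating

theorem CyclicallyReduced.coefficient_ne_one {l : Word B Unit} (hl : CyclicallyReduced l)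
    (halt : (l : Cycle (B × Unit × Bool)).Chain fun a b => a.2.2 ≠ b.2.2) :
    ∀ b ∈ l, b.1 ≠ 1 := by
  refine forall_mem_of_chain (P := fun b : B × Unit × Bool => b.1 ≠ 1) ?_
  by_contra hchain
  obtain ⟨p, q, l₁, l₂, hpq, hrot, h1⟩ := exists_rotation_of_not_chain hchain
  rw [CyclicallyReduced, Cycle.coe_eq_coe.2 hrot, ← hpq] at hl
  rw [Cycle.coe_eq_coe.2 hrot, ← hpq] at halt
  exact rel_of_chain_of_append_eq hpq halt (rel_of_chain_of_append_eq hpq hl (not_not.1 h1) rfl)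

/-- When the signs alternate, `t` is preceded only by coefficients from `K true` and `t⁻¹` only by
coefficients from `K false`, so the two subgroups may be embedded independently and the unknown
chosen so that it carries one embedding to the other. -/
theorem exists_sign_embedding {B E : Type u} [Group B] [Group E] {K : Bool → Subgroup B}
    {j : ∀ e, K e →* E} (hj : ∀ e, Injective (j e)) (τ : E) :
    ∃ (E' : Type u) (_ : Group E') (f : B →* E') (g : E →* E') (t d : E'), Injective f ∧
      t * d = g τ ∧ (∀ b : K true, f b = g (j true b)) ∧
        ∀ b : K false, f b = d * g (j false b) * d⁻¹ := by
  obtain ⟨E₁, _, g₁, g₂, hg₁, hg₂, hg⟩ := exists_amalgam (K true).subtype_injective (hj true)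
  obtain ⟨E₂, _, g, t, hginj, ht⟩ := exists_conj_extension (f₁ := g₁.comp (K false).subtype)
    (f₂ := (MulAut.conj (g₂ τ)).toMonoidHom.comp (g₂.comp (j false)))
    (hg₁.comp (K false).subtype_injective)
    ((MulAut.conj (g₂ τ)).injective.comp (hg₂.comp (hj false)))
  refine ⟨E₂, _, g.comp g₁, g.comp g₂, t, t⁻¹ * g (g₂ τ), hginj.comp hg₁,
    mul_inv_cancel_left _ _, fun b => congrArg g (hg b), fun b => ?_⟩
  have hb : t * g (g₁ b) * t⁻¹ = g (g₂ τ) * g (g₂ (j false b)) * (g (g₂ τ))⁻¹ := by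
    simpa using ht b
  calc g (g₁ b)
    _ = t⁻¹ * (t * g (g₁ b) * t⁻¹) * t := by group
    _ = _ := by
      rw [hb, MonoidHom.comp_apply]
      group

theorem hasSolution_of_alternating_twistedEval_eq_one {B E : Type} [Group B] [Group E]
    {s : Bool → Set B} {ψ : ∀ e, Subgroup.closure (s e) →* Multiplicative ℤ}
    {φ : Bool → B → ℤ} (hψ : ∀ e x, ψ e x = .ofAdd (φ e x)) {F : B × Multiplicative ℤ →* E}
    (hF : Injective F) {τ : E} {c : Bool → ℤ} {l : Word B Unit} (hs : ∀ a ∈ l, a.1 ∈ s a.2.2)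
    (halt : (l : Cycle (B × Unit × Bool)).Chain fun a b => a.2.2 ≠ b.2.2)
    (h : twistedEval F τ (fun a => c a.2.2 * φ a.2.2 a.1) (fun _ => 0) l = 1) :
    HasSolution l := by
  choose j hj hj' using fun e => exists_twist (hψ e) (c e)
  obtain ⟨E', _, f, g, t, d, hf, htd, hpos, hneg⟩ :=
    exists_sign_embedding (j := fun e => F.comp (j e)) (fun e => hF.comp (hj e)) τ
  simp only [MonoidHom.comp_apply, hj'] at hpos hneg
  refine ⟨E', _, f, t, hf, isConj_one_left.1 ?_⟩
  rw [← map_one g, ← h, twistedEval, map_list_prod, List.map_map]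
  refine isConj_prod_map_of_telescoping (A := fun a => cond a.2.2 1 d)
    (A' := fun a => cond a.2.2 d 1) (fun a ha => ?_) (halt.imp fun a b hab => ?_)
  · obtain ⟨b, _, e⟩ := a
    have hb := Subgroup.subset_closure (hs _ ha)
    cases e
    · simp [hneg ⟨b, hb⟩, ← Prod.one_eq_mk, ← htd, mul_assoc]
    · simp [hpos ⟨b, hb⟩, ← Prod.one_eq_mk, ← htd, mul_assoc]
  · rw [Bool.eq_not_iff.2 hab.symm]
    cases a.2.2 <;> rfl

theorem hasSolution_of_alternating {B : Type} [Group B] (hB : LocallyIndicable B)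
    {l : Word B Unit} (hl : CyclicallyReduced l) (hsolv : ∀ k < l.length, EquationsSolvable k)
    (halt : (l : Cycle (B × Unit × Bool)).Chain fun a b => a.2.2 ≠ b.2.2) : HasSolution l := by
  rcases eq_or_ne l [] with rfl | hnil
  · exact .of_forall_eq_one (by simp)
  have hchar (e : Bool) : ∃ (s : Set B) (ψ : Subgroup.closure s →* Multiplicative ℤ) (φ : B → ℤ),
      (∀ a ∈ l, a.2.2 = e → a.1 ∈ s) ∧ (∀ x, ψ x = .ofAdd (φ x)) ∧
        ∃ a ∈ l, a.2.2 = e ∧ φ a.1 ≠ 0 := by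
    obtain ⟨a, ha, he⟩ := exists_mem_eq_of_chain_ne hnil halt e
    obtain ⟨ψ, φ, hψ, b, hb, hφ⟩ := hB.exists_character
      (s := {b | b ∈ (l.filter (·.2.2 = e)).map Prod.fst}) (List.finite_toSet _)
      (List.mem_map_of_mem (List.mem_filter.2 ⟨ha, decide_eq_true he⟩))
      (hl.coefficient_ne_one halt a ha)
    obtain ⟨x, hx, rfl⟩ := List.mem_map.1 hb
    rw [List.mem_filter, decide_eq_true_eq] at hx
    exact ⟨_, ψ, φ, fun y hy he => List.mem_map_of_mem (List.mem_filter.2 ⟨hy, decide_eq_true he⟩),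
      hψ, x, hx.1, hx.2, hφ⟩
  choose s ψ φ hs hψ x hx hxe hφ using hchar
  obtain ⟨c₁, c₀, hc, hsum⟩ := exists_int_relation
    (l.map fun a => cond a.2.2 (φ true a.1) 0).sum (l.map fun a => cond a.2.2 0 (φ false a.1)).sum
  let c (e : Bool) : ℤ := cond e c₁ c₀
  let u (a : B × Unit × Bool) : ℤ := c a.2.2 * φ a.2.2 a.1
  have hsum' : (l.map fun a => u a + 0).sum = 0 := by
    refine Eq.trans ?_ hsum
    rw [← List.sum_map_mul_left, ← List.sum_map_mul_left, ← List.sum_map_add]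
    congr 2 with a
    cases he : a.2.2 <;> simp [u, c, he]
  have hne : ¬ (l : Cycle (B × Unit × Bool)).Chain fun _ b => 0 + u b = 0 := fun hchain => by
    have hu (e : Bool) : c e = 0 := by
      have := forall_mem_of_chain hchain (x e) (hx e)
      simpa [u, hxe, hφ] using this
    exact hc.elim (fun h => h (hu true)) fun h => h (hu false)
  obtain ⟨E, _, F, τ, hF, hτ⟩ := exists_twisted_solution hB hl hsolv hsum' hne
  exact hasSolution_of_alternating_twistedEval_eq_one hψ hF (fun a ha => hs _ a ha rfl) halt hτ

end Alternating

theorem equationsSolvable (n : ℕ) : EquationsSolvable n := by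
  induction n using Nat.strong_induction_on with
  | _ n ih =>
    rintro B _ hB l rfl hl
    by_cases halt : (l : Cycle (B × Unit × Bool)).Chain fun a b => a.2.2 ≠ b.2.2
    · exact hasSolution_of_alternating hB hl ih halt
    obtain ⟨p, q, l₁, l₂, hpq, hrot, hsign⟩ := exists_rotation_of_not_chain halt
    obtain ⟨E, _, f, t, hf, ht⟩ := hasSolution_of_sign_eq hB hpq (hl.of_isRotated hrot)
      (by rwa [← hrot.perm.length_eq]) (not_not.1 hsign)
    refine ⟨E, _, f, t, hf, ?_⟩
    rw [← isConj_one_right, ← ht]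
    exact (isConj_eval_of_isRotated _ _ hrot).symm

/-! ### The Freiheitssatz -/

theorem exists_ofWord_mul_const (x : FreeAdjoin B ι) :
    ∃ (l : Word B ι) (b : B), ofWord l * const b = x := by
  have hvar (i : ι) (e : Bool) {x : FreeAdjoin B ι} (hx : ∃ (l : Word B ι) (b : B),
      ofWord l * const b = x) : ∃ (l : Word B ι) (b : B),
      ofWord l * const b = signed (var i) e * x := by
    obtain ⟨l, b, rfl⟩ := hx
    exact ⟨(1, i, e) :: l, b, by simp [ofWord, mul_assoc]⟩
  induction x using Coprod.induction_on' with
  | one => exact ⟨[], 1, by simp [ofWord]⟩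
  | inr_mul c x ih =>
    obtain ⟨_ | ⟨a, l⟩, b, rfl⟩ := ih
    · exact ⟨[], c * b, by simp [ofWord, const]⟩
    · exact ⟨(c * a.1, a.2) :: l, b, by simp [ofWord, const, mul_assoc]⟩
  | inl_mul w x ih =>
    induction w using FreeGroup.induction_on generalizing x with
    | C1 => simpa using ih
    | of i => exact hvar i true ih
    | inv_of i _ => simpa [var] using hvar i false ih
    | mul v w hv hw =>
      rw [map_mul, mul_assoc]
      exact hv _ (hw _ ih)

theorem isConj_ofWord_of_not_compat {p q : B × ι × Bool} (h : ¬ Compat p q) (l : Word B ι) :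
    IsConj (ofWord l * const p.1) (ofWord (q :: (l ++ [p]))) := by
  obtain ⟨b, i, e⟩ := p
  obtain ⟨c, k, d⟩ := q
  rw [Compat] at h
  push Not at h
  obtain ⟨rfl, rfl, hed⟩ := h
  refine isConj_iff.2 ⟨signed (var i) d, ?_⟩
  cases e <;> cases d <;> simp_all [ofWord, mul_assoc]

theorem isConj_const_or_exists_cyclicallyReduced (x : FreeAdjoin B ι) :
    (∃ b, IsConj (const b) x) ∨ ∃ l : Word B ι, CyclicallyReduced l ∧ IsConj (ofWord l) x := by
  obtain ⟨l, b, rfl⟩ := exists_ofWord_mul_const x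
  induction hn : l.length using Nat.strong_induction_on generalizing l b with
  | _ n ih =>
    cases l with
    | nil => exact .inl ⟨b, by rw [ofWord, eval_nil, one_mul]⟩
    | cons a l =>
      let l' : Word B ι := (b * a.1, a.2) :: l
      have habsorb : IsConj (ofWord l') (ofWord (a :: l) * const b) :=
        isConj_iff.2 ⟨(const b)⁻¹, by simp [l', ofWord, mul_assoc]⟩
      by_cases hl' : CyclicallyReduced l'
      · exact .inr ⟨l', hl', habsorb⟩
      obtain ⟨p, q, l₁, l₂, hpq, hrot, hcompat⟩ := exists_rotation_of_not_chain hl'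
      cases l₁ with
      | nil =>
        obtain ⟨rfl, -⟩ := List.cons_eq_cons.1 hpq
        exact absurd (fun _ _ => rfl) hcompat
      | cons q' m =>
        obtain ⟨rfl, rfl : m ++ [p] = l₂⟩ := List.cons_eq_cons.1 hpq
        have hconj := (isConj_ofWord_of_not_compat hcompat m).trans
          ((isConj_eval_of_isRotated const var hrot).symm.trans habsorb)
        have hlen : m.length < n := by
          have := hrot.perm.length_eq
          simp only [l', List.length_cons, List.length_append, List.length_nil] at hn this
          omega
        exact (ih _ hlen m p.1 rfl).imp (fun ⟨c, hc⟩ => ⟨c, hc.trans hconj⟩)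
          fun ⟨w, hw, hc⟩ => ⟨w, hw, hc.trans hconj⟩

theorem disjoint_normalClosure_supported {B ι : Type} [Group B] (hB : LocallyIndicable B)
    {S : Set ι} {r : FreeAdjoin B ι} (hr : ∀ s ∈ supported S, ¬ IsConj s r) :
    Disjoint (Subgroup.normalClosure {r}) (supported S) := by
  classical
  obtain ⟨b, hb⟩ | ⟨l, hl, hlr⟩ := isConj_const_or_exists_cyclicallyReduced r
  · exact absurd hb (hr _ (const_mem_supported S b))
  obtain ⟨a, ha, haS⟩ : ∃ a ∈ l, a.2.1 ∉ S := by
    by_contra! hS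
    exact hr _ (ofWord_mem_supported hS) hlr
  rw [← normalClosure_singleton_eq_of_isConj hlr]
  exact (disjoint_normalClosure_ofWord_supported hB hl ha (equationsSolvable _)).mono_right
    (supported_mono fun i hi => ne_of_mem_of_not_mem hi haS)

end FreeAdjoin

theorem embed_primitive_times_H_general {α H : Type} [Group H]
    (hH : LocallyIndicable H)
    (p : FreeGroup α) (hp : IsPrimitive p)
    (r : Coprod (FreeGroup α) H)
    (hrS : ¬ ∃ s ∈ Subgroup.closure
        ({Coprod.inl p} ∪ Set.range (Coprod.inr : H →* Coprod (FreeGroup α) H) :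
          Set (Coprod (FreeGroup α) H)), IsConj s r) :
    Set.InjOn (QuotientGroup.mk' (Subgroup.normalClosure {r}))
      (Subgroup.closure
        ({Coprod.inl p} ∪ Set.range (Coprod.inr : H →* Coprod (FreeGroup α) H) :
          Set (Coprod (FreeGroup α) H))) := by
  obtain ⟨β, e, rfl⟩ := hp
  let Φ : FreeAdjoin H (Option β) ≃* Coprod (FreeGroup α) H := MulEquiv.coprodCongr e (.refl H)
  have hΦ : (FreeAdjoin.supported {none}).map Φ.toMonoidHom = Subgroup.closure
      ({Coprod.inl (e (.of none))} ∪ Set.range (Coprod.inr : H →* Coprod (FreeGroup α) H)) := by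
    rw [FreeAdjoin.supported, MonoidHom.map_closure, Set.image_union, Set.image_singleton,
      Set.image_singleton, ← Set.range_comp]
    rfl
  refine injOn_mk'_of_disjoint ?_
  have hdisj : Disjoint (Subgroup.normalClosure {Φ.symm r}) (FreeAdjoin.supported {none}) :=
    FreeAdjoin.disjoint_normalClosure_supported hH fun s hs hsr => hrS
      ⟨Φ s, hΦ ▸ Subgroup.mem_map_of_mem _ hs, by simpa using Φ.toMonoidHom.map_isConj hsr⟩
  have hmap := Subgroup.disjoint_map (f := Φ.toMonoidHom) Φ.injective hdisj
  rwa [Subgroup.map_normalClosure _ Φ.toMonoidHom Φ.surjective, hΦ, Set.image_singleton,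
    MulEquiv.coe_toMonoidHom, Φ.apply_symm_apply] at hmap

/-- If `p` is primitive in the free group `F`, `H` is locally indicable and
`r ∈ F ∗ H` is not conjugate into `F`, `H` or `⟨p⟩ ∗ H`, then `⟨p⟩ ∗ H` embeds
canonically into `(F ∗ H)/⟨⟨r⟩⟩`. -/
theorem embed_primitive_times_H {α H : Type} [Group H]
    (hH : LocallyIndicable H)
    (p : FreeGroup α) (hp : IsPrimitive p)
    (r : Coprod (FreeGroup α) H)
    (hrA : ¬ ∃ a : FreeGroup α, IsConj (Coprod.inl a) r)
    (hrH : ¬ ∃ h : H, IsConj (Coprod.inr h) r)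
    (hrS : ¬ ∃ s ∈ Subgroup.closure
        ({Coprod.inl p} ∪ Set.range (Coprod.inr : H →* Coprod (FreeGroup α) H) :
          Set (Coprod (FreeGroup α) H)), IsConj s r) :
    Set.InjOn (QuotientGroup.mk' (Subgroup.normalClosure {r}))
      (Subgroup.closure
        ({Coprod.inl p} ∪ Set.range (Coprod.inr : H →* Coprod (FreeGroup α) H) :
          Set (Coprod (FreeGroup α) H))) :=
  embed_primitive_times_H_general hH p hp r hrS
end
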